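/- Let n ≥ 1, γ > −min(2,n), α > 1 with α ≥ max(1, 1+γ/n), γ/(α−1) ≤ s ≤ n, α ≤ q ≤ ∞, 0 < r ≤ ∞, and assume s/n + 1/q > 0 or (s/n + 1/q = 0 and r = ∞), and s/n + 1/q < 1 or (s/n + 1/q = 1 and r ≤ 1). Assume the double subcritical condition s/n + 1/q < min(1/q_c, 1/Q_c). Let T > 0, let u₀ be measurable, and let u₁, u₂ be two mild solutions of the Hardy–Hénon equation on (0,T) with the same initial data u₀ such that ess sup_{t∈(0,T)} ‖u_i(t)‖_{K̇^s_{q,r}} < ∞ for i = 1,2. Then u₁(t,x) = u₂(t,x) for almost every (t,x) ∈ (0,T)×ℝⁿ. -/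

import Mathlib

open MeasureTheory Set ENNReal Filter

noncomputable section

abbrev Euc (n : ℕ) : Type := EuclideanSpace ℝ (Fin n)

def annulus (n : ℕ) (j : ℤ) : Set (Euc n) :=
  {x : Euc n | (2 : ℝ) ^ (j - 1) ≤ ‖x‖ ∧ ‖x‖ < (2 : ℝ) ^ j}

def herzNorm (n : ℕ) (s : ℝ) (q r : ℝ≥0∞) (f : Euc n → ℝ) : ℝ≥0∞ :=
  if r = ⊤ then
    ⨆ j : ℤ, ENNReal.ofReal ((2 : ℝ) ^ ((j : ℝ) * s)) *
      eLpNorm ((annulus n j).indicator f) q volume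
  else
    (∑' j : ℤ, (ENNReal.ofReal ((2 : ℝ) ^ ((j : ℝ) * s)) *
      eLpNorm ((annulus n j).indicator f) q volume) ^ r.toReal) ^ (1 / r.toReal)

def heatKernel (n : ℕ) (t : ℝ) (x y : Euc n) : ℝ :=
  (4 * Real.pi * t) ^ (-(n : ℝ) / 2) * Real.exp (-‖x - y‖ ^ 2 / (4 * t))

def heatSemigroup (n : ℕ) (t : ℝ) (f : Euc n → ℝ) (x : Euc n) : ℝ :=
  ∫ y, heatKernel n t x y * f y

def nonlin (n : ℕ) (γ α : ℝ) (v : Euc n → ℝ) (x : Euc n) : ℝ :=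
  ‖x‖ ^ γ * |v x| ^ (α - 1) * v x

/-- `u` is a mild solution of the Hardy–Hénon equation
`∂ₜu - Δu = |x|^γ |u|^{α-1} u` on `(0,T) × ℝⁿ` with initial data `u₀`:
`u` is measurable, and for a.e. `(t,x) ∈ (0,T) × ℝⁿ` the relevant integrals
converge absolutely and the Duhamel formula holds. -/
def IsMildSolution (n : ℕ) (γ α T : ℝ) (u₀ : Euc n → ℝ) (u : ℝ → Euc n → ℝ) : Prop :=
  Measurable (Function.uncurry u) ∧
  ∀ᵐ p : ℝ × Euc n ∂((volume.restrict (Set.Ioo (0 : ℝ) T)).prod volume),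
    (Integrable (fun y => heatKernel n p.1 p.2 y * u₀ y) volume) ∧
    (Integrable (fun z : ℝ × Euc n =>
        heatKernel n (p.1 - z.1) p.2 z.2 * nonlin n γ α (u z.1) z.2)
      ((volume.restrict (Set.Ioo (0 : ℝ) p.1)).prod volume)) ∧
    u p.1 p.2 = heatSemigroup n p.1 u₀ p.2 +
      ∫ z : ℝ × Euc n, heatKernel n (p.1 - z.1) p.2 z.2 * nonlin n γ α (u z.1) z.2
        ∂((volume.restrict (Set.Ioo (0 : ℝ) p.1)).prod volume)

/-!
The difference of two solutions is estimated in `K̇^s_{q,∞}`, the largest of the spaces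
`K̇^s_{q,r}`. By the Duhamel formula it is at most the time integral of `e^{(t-τ)Δ}` applied to the
difference of the nonlinearities, which Hölder's inequality puts into `K̇^{αs-γ}_{q/α,∞}`. Write
`a = n(s/n + 1/q)`. Splitting the data into dyadic annuli, with Young's inequality for nearby annuli
and Gaussian decay for distant ones, one finds that `e^{tΔ}` maps this space back into `K̇^s_{q,∞}`
with norm `O(t^{-((α-1)a-γ)/2})`; the contributions of the annuli are summable because
`s/n + 1/q < 1/Q_c`. The condition `s/n + 1/q < 1/q_c` says precisely that the singularity in time
is integrable, and a Gronwall inequality with an integrable singular kernel makes the difference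
vanish.
-/

section Minkowski

variable {X Y : Type*} [MeasurableSpace X] [MeasurableSpace Y]

theorem measurable_eLpNorm_uncurry {F : Y → X → ℝ≥0∞} (hF : Measurable (Function.uncurry F))
    (q : ℝ≥0∞) (μ : Measure X) [SFinite μ] : Measurable fun y => eLpNorm (F y) q μ := by
  rcases eq_or_ne q 0 with rfl | hq0
  · simp only [eLpNorm_exponent_zero, measurable_const]
  rcases eq_or_ne q ⊤ with rfl | hqt
  · refine measurable_of_Ioi fun a => ?_
    have hpre : (fun y => eLpNorm (F y) ⊤ μ) ⁻¹' Ioi a = {y | 0 < μ {x | a < F y x}} := by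
      ext y
      have hle : eLpNorm (F y) ⊤ μ ≤ a ↔ μ {x | a < F y x} = 0 := by
        simp only [← not_le, ← ae_iff, eLpNorm_exponent_top]
        exact ⟨fun h => (enorm_ae_le_eLpNormEssSup (F y) μ).mono fun x hx => hx.trans h,
          fun h => eLpNormEssSup_le_of_ae_enorm_bound h⟩
      simpa only [mem_preimage, mem_Ioi, mem_ofPred_eq, not_le, pos_iff_ne_zero] using not_congr hle
    rw [hpre]
    exact measurableSet_lt measurable_const
      (measurable_measure_prodMk_left (measurableSet_lt measurable_const hF))
  · simp only [eLpNorm_eq_lintegral_rpow_enorm_toReal hq0 hqt, enorm_eq_self]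
    exact ((hF.pow_const q.toReal).lintegral_prod_right').pow_const _

theorem lintegral_le_lintegral_weight_rpow_mul {ν : Measure Y} {c f : Y → ℝ≥0∞}
    (hc : AEMeasurable c ν) (hf : AEMeasurable f ν) (hct : ∀ᵐ y ∂ν, c y ≠ ⊤)
    (hc0 : ∀ᵐ y ∂ν, c y = 0 → f y = 0) {Q : ℝ} (hQ : 1 ≤ Q) :
    ∫⁻ y, f y ∂ν ≤ (∫⁻ y, c y ∂ν) ^ (1 - Q⁻¹) * (∫⁻ y, c y ^ (1 - Q) * f y ^ Q ∂ν) ^ Q⁻¹ := by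
  have hQ0 : 0 < Q := one_pos.trans_le hQ
  have hQinv : Q⁻¹ ≤ 1 := inv_le_one_of_one_le₀ hQ
  refine le_trans (lintegral_mono_ae ?_) (ENNReal.lintegral_mul_norm_pow_le hc
    ((hc.pow_const (1 - Q)).mul (hf.pow_const Q)) (sub_nonneg.2 hQinv) (inv_nonneg.2 hQ0.le)
    (sub_add_cancel 1 Q⁻¹))
  filter_upwards [hct, hc0] with y hyt hy0
  rcases eq_or_ne (c y) 0 with h0 | h0
  · simp only [hy0 h0, zero_le]
  · refine le_of_eq ?_
    rw [Pi.mul_apply, ENNReal.mul_rpow_of_nonneg _ _ (inv_nonneg.2 hQ0.le), ← ENNReal.rpow_mul,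
      ← ENNReal.rpow_mul, mul_inv_cancel₀ hQ0.ne', ENNReal.rpow_one, ← mul_assoc,
      ← ENNReal.rpow_add _ _ h0 hyt, sub_mul, one_mul, mul_inv_cancel₀ hQ0.ne']
    simp only [sub_add_sub_cancel, sub_self, ENNReal.rpow_zero, one_mul]

theorem lintegral_eLpNorm_rpow_mul_rpow_le {μ : Measure X} {g : X → ℝ≥0∞} (hg : Measurable g)
    {q : ℝ≥0∞} (hq0 : q ≠ 0) (hqt : q ≠ ⊤) (hgt : eLpNorm g q μ ≠ ⊤) :
    ∫⁻ x, eLpNorm g q μ ^ (1 - q.toReal) * g x ^ q.toReal ∂μ ≤ eLpNorm g q μ := by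
  have hQ0 : 0 < q.toReal := ENNReal.toReal_pos hq0 hqt
  have hpow : ∫⁻ x, g x ^ q.toReal ∂μ = eLpNorm g q μ ^ q.toReal := by
    simp only [eLpNorm_eq_lintegral_rpow_enorm_toReal hq0 hqt, enorm_eq_self]
    rw [← ENNReal.rpow_mul, one_div_mul_cancel hQ0.ne', ENNReal.rpow_one]
  rw [lintegral_const_mul _ (hg.pow_const q.toReal), hpow]
  rcases eq_or_ne (eLpNorm g q μ) 0 with h0 | h0
  · rw [h0, ENNReal.zero_rpow_of_pos hQ0, mul_zero]
  · rw [← ENNReal.rpow_add _ _ h0 hgt, sub_add_cancel, ENNReal.rpow_one]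

variable {μ : Measure X} {ν : Measure Y} [SFinite μ] [SFinite ν]

theorem ae_ae_eq_zero_of_eLpNorm_eq_zero {F : Y → X → ℝ≥0∞} (hF : Measurable (Function.uncurry F))
    {q : ℝ≥0∞} (hq : q ≠ 0) : ∀ᵐ x ∂μ, ∀ᵐ y ∂ν, eLpNorm (F y) q μ = 0 → F y x = 0 := by
  have hmeas : MeasurableSet {z : Y × X | eLpNorm (F z.1) q μ = 0 → F z.1 z.2 = 0} :=
    (((measurable_eLpNorm_uncurry hF q μ).comp measurable_fst) (measurableSet_singleton 0)).imp
      (hF (measurableSet_singleton 0))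
  refine (Measure.ae_ae_comm hmeas).1 (Eventually.of_forall fun y => ?_)
  by_cases hy : eLpNorm (F y) q μ = 0
  · rw [eLpNorm_eq_zero_iff (hF.of_uncurry_left).aestronglyMeasurable hq] at hy
    filter_upwards [hy] with x hx _ using hx
  · exact Eventually.of_forall fun x h => absurd h hy

theorem eLpNorm_top_lintegral_le {F : Y → X → ℝ≥0∞} (hF : Measurable (Function.uncurry F)) :
    eLpNorm (fun x => ∫⁻ y, F y x ∂ν) ⊤ μ ≤ ∫⁻ y, eLpNorm (F y) ⊤ μ ∂ν := by
  have hmeas : MeasurableSet {z : Y × X | F z.1 z.2 ≤ eLpNorm (F z.1) ⊤ μ} :=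
    measurableSet_le hF ((measurable_eLpNorm_uncurry hF ⊤ μ).comp measurable_fst)
  have hle : ∀ᵐ x ∂μ, ∀ᵐ y ∂ν, F y x ≤ eLpNorm (F y) ⊤ μ :=
    (Measure.ae_ae_comm hmeas).1 (Eventually.of_forall fun y => by
      simpa only [eLpNorm_exponent_top, enorm_eq_self] using enorm_ae_le_eLpNormEssSup (F y) μ)
  rw [eLpNorm_exponent_top]
  refine eLpNormEssSup_le_of_ae_enorm_bound ?_
  filter_upwards [hle] with x hx using lintegral_mono_ae hx

theorem lintegral_rpow_lintegral_le {F : Y → X → ℝ≥0∞} (hF : Measurable (Function.uncurry F))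
    {q : ℝ≥0∞} (hq : 1 ≤ q) (hqt : q ≠ ⊤) (hct : ∀ᵐ y ∂ν, eLpNorm (F y) q μ ≠ ⊤) :
    ∫⁻ x, (∫⁻ y, F y x ∂ν) ^ q.toReal ∂μ ≤ (∫⁻ y, eLpNorm (F y) q μ ∂ν) ^ q.toReal := by
  set c : Y → ℝ≥0∞ := fun y => eLpNorm (F y) q μ
  set Q : ℝ := q.toReal
  have hq0 : q ≠ 0 := (one_pos.trans_le hq).ne'
  have hQ : 1 ≤ Q := ENNReal.toReal_mono hqt hq
  have hQ0 : 0 < Q := one_pos.trans_le hQ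
  have hcm : Measurable c := measurable_eLpNorm_uncurry hF q μ
  have hcF : Measurable fun z : X × Y => c z.2 ^ (1 - Q) * F z.2 z.1 ^ Q :=
    ((hcm.comp measurable_snd).pow_const _).mul ((hF.comp measurable_swap).pow_const _)
  have hpoint : ∀ᵐ x ∂μ, (∫⁻ y, F y x ∂ν) ^ Q ≤
      (∫⁻ y, c y ∂ν) ^ (Q - 1) * ∫⁻ y, c y ^ (1 - Q) * F y x ^ Q ∂ν := by
    filter_upwards [ae_ae_eq_zero_of_eLpNorm_eq_zero (μ := μ) (ν := ν) hF hq0] with x hx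
    have h := ENNReal.rpow_le_rpow (lintegral_le_lintegral_weight_rpow_mul hcm.aemeasurable
      (hF.of_uncurry_right (y := x)).aemeasurable hct hx hQ) hQ0.le
    rwa [ENNReal.mul_rpow_of_nonneg _ _ hQ0.le, ← ENNReal.rpow_mul, ← ENNReal.rpow_mul, sub_mul,
      one_mul, inv_mul_cancel₀ hQ0.ne', ENNReal.rpow_one] at h
  calc ∫⁻ x, (∫⁻ y, F y x ∂ν) ^ Q ∂μ
      ≤ ∫⁻ x, (∫⁻ y, c y ∂ν) ^ (Q - 1) * ∫⁻ y, c y ^ (1 - Q) * F y x ^ Q ∂ν ∂μ :=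
        lintegral_mono_ae hpoint
    _ = (∫⁻ y, c y ∂ν) ^ (Q - 1) * ∫⁻ y, ∫⁻ x, c y ^ (1 - Q) * F y x ^ Q ∂μ ∂ν := by
        rw [lintegral_const_mul _ hcF.lintegral_prod_right',
          lintegral_lintegral_swap hcF.aemeasurable]
    _ ≤ (∫⁻ y, c y ∂ν) ^ (Q - 1) * (∫⁻ y, c y ∂ν) ^ (1 : ℝ) := by
        rw [ENNReal.rpow_one]
        gcongr 1
        exact lintegral_mono_ae (hct.mono fun y hy =>
          lintegral_eLpNorm_rpow_mul_rpow_le hF.of_uncurry_left hq0 hqt hy)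
    _ = (∫⁻ y, c y ∂ν) ^ Q := by
        rw [← ENNReal.rpow_add_of_nonneg _ _ (sub_nonneg.2 hQ) zero_le_one, sub_add_cancel]

theorem eLpNorm_lintegral_le {F : Y → X → ℝ≥0∞} (hF : Measurable (Function.uncurry F))
    {q : ℝ≥0∞} (hq : 1 ≤ q) :
    eLpNorm (fun x => ∫⁻ y, F y x ∂ν) q μ ≤ ∫⁻ y, eLpNorm (F y) q μ ∂ν := by
  rcases eq_or_ne q ⊤ with rfl | hqt
  · exact eLpNorm_top_lintegral_le hF
  by_cases hct : ∀ᵐ y ∂ν, eLpNorm (F y) q μ ≠ ⊤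
  · rw [eLpNorm_eq_lintegral_rpow_enorm_toReal (one_pos.trans_le hq).ne' hqt, one_div,
      ENNReal.rpow_inv_le_iff (ENNReal.toReal_pos (one_pos.trans_le hq).ne' hqt)]
    exact lintegral_rpow_lintegral_le hF hq hqt hct
  · have htop : ∫⁻ y, eLpNorm (F y) q μ ∂ν = ⊤ := by
      by_contra hfin
      exact hct ((ae_lt_top (measurable_eLpNorm_uncurry hF q μ) hfin).mono fun y hy => hy.ne)
    exact htop ▸ le_top

end Minkowski

section SchurYoung

theorem toReal_inv_le_one {p : ℝ≥0∞} (hp : 1 ≤ p) : p.toReal⁻¹ ≤ 1 := by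
  rcases eq_or_ne p ⊤ with rfl | hpt
  · simp
  · exact inv_le_one_of_one_le₀ (ENNReal.toReal_mono hpt hp)

variable {X Y : Type*} [MeasurableSpace X] [MeasurableSpace Y] {μ : Measure X} {ν : Measure Y}

theorem eLpNorm_rpow_toReal_eq_lintegral {g : Y → ℝ≥0∞} {p : ℝ≥0∞} (hp : p ≠ 0) (hpt : p ≠ ⊤) :
    eLpNorm g p ν ^ p.toReal = ∫⁻ y, g y ^ p.toReal ∂ν := by
  simp only [eLpNorm_eq_lintegral_rpow_enorm_toReal hp hpt, enorm_eq_self]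
  rw [one_div, ENNReal.rpow_inv_rpow (ENNReal.toReal_pos hp hpt).ne']

theorem eLpNorm_le_rpow_mul_eLpNorm_rpow {h : X → ℝ≥0∞} (hh : AEMeasurable h μ)
    {M p q : ℝ≥0∞} (hp : p ≠ 0) (hpq : p ≤ q) (hM : ∀ᵐ x ∂μ, h x ≤ M) :
    eLpNorm h q μ ≤ M ^ (1 - p.toReal / q.toReal) * eLpNorm h p μ ^ (p.toReal / q.toReal) := by
  rcases eq_or_ne q ⊤ with rfl | hqt
  · simpa using eLpNormEssSup_le_of_ae_enorm_bound hM
  have hpt : p ≠ ⊤ := ne_top_of_le_ne_top hqt hpq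
  have hq : q ≠ 0 := (hp.bot_lt.trans_le hpq).ne'
  have hP : 0 < p.toReal := ENNReal.toReal_pos hp hpt
  have hQ : 0 < q.toReal := ENNReal.toReal_pos hq hqt
  have hPQ : 0 ≤ q.toReal - p.toReal := sub_nonneg.2 (ENNReal.toReal_mono hqt hpq)
  rw [← ENNReal.rpow_le_rpow_iff hQ, eLpNorm_rpow_toReal_eq_lintegral hq hqt,
    ENNReal.mul_rpow_of_nonneg _ _ hQ.le, ← ENNReal.rpow_mul, ← ENNReal.rpow_mul, sub_mul,
    one_mul, div_mul_cancel₀ _ hQ.ne', eLpNorm_rpow_toReal_eq_lintegral hp hpt]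
  calc ∫⁻ x, h x ^ q.toReal ∂μ
      ≤ ∫⁻ x, M ^ (q.toReal - p.toReal) * h x ^ p.toReal ∂μ := by
        refine lintegral_mono_ae (hM.mono fun x hx => ?_)
        rw [← sub_add_cancel q.toReal p.toReal, ENNReal.rpow_add_of_nonneg _ _ hPQ hP.le,
          add_sub_cancel_right]
        gcongr
    _ = _ := lintegral_const_mul'' _ (hh.pow_const _)

theorem lintegral_mul_le_rpow_mul_lintegral_rpow {k f : Y → ℝ≥0∞} (hk : AEMeasurable k ν)
    (hf : AEMeasurable f ν) {P : ℝ} (hP : 1 ≤ P) :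
    ∫⁻ y, k y * f y ∂ν ≤ (∫⁻ y, k y ∂ν) ^ (1 - P⁻¹) * (∫⁻ y, k y * f y ^ P ∂ν) ^ P⁻¹ := by
  have hP0 : 0 < P := one_pos.trans_le hP
  have hPinv : 0 ≤ 1 - P⁻¹ := sub_nonneg.2 (inv_le_one_of_one_le₀ hP)
  refine le_of_eq_of_le (lintegral_congr fun y => ?_) (ENNReal.lintegral_mul_norm_pow_le hk
    (hk.mul (hf.pow_const P)) hPinv (inv_nonneg.2 hP0.le) (sub_add_cancel 1 P⁻¹))
  rw [Pi.mul_apply, ENNReal.mul_rpow_of_nonneg _ _ (inv_nonneg.2 hP0.le),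
    ENNReal.rpow_rpow_inv hP0.ne', ← mul_assoc,
    ← ENNReal.rpow_add_of_nonneg _ _ hPinv (inv_nonneg.2 hP0.le), sub_add_cancel, ENNReal.rpow_one]

theorem lintegral_mul_le_mul_eLpNorm {k f : Y → ℝ≥0∞} (hk : AEMeasurable k ν)
    (hf : AEMeasurable f ν) {p A g : ℝ≥0∞} (hp : 1 ≤ p) (hA : ∫⁻ y, k y ∂ν ≤ A)
    (hg : ∀ᵐ y ∂ν, k y ≤ g) :
    ∫⁻ y, k y * f y ∂ν ≤ A ^ (1 - p.toReal⁻¹) * g ^ p.toReal⁻¹ * eLpNorm f p ν := by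
  rcases eq_or_ne p ⊤ with rfl | hpt
  · simp only [toReal_top, _root_.inv_zero, sub_zero, ENNReal.rpow_one, ENNReal.rpow_zero, mul_one]
    calc ∫⁻ y, k y * f y ∂ν ≤ ∫⁻ y, k y * eLpNorm f ⊤ ν ∂ν := by
          refine lintegral_mono_ae ((enorm_ae_le_eLpNormEssSup f ν).mono fun y hy => ?_)
          rw [eLpNorm_exponent_top]
          gcongr
          exact hy
      _ = (∫⁻ y, k y ∂ν) * eLpNorm f ⊤ ν := lintegral_mul_const'' _ hk
      _ ≤ A * eLpNorm f ⊤ ν := by gcongr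
  have hp0 : p ≠ 0 := (one_pos.trans_le hp).ne'
  have hP : 1 ≤ p.toReal := ENNReal.toReal_mono hpt hp
  have hP0 : 0 < p.toReal := one_pos.trans_le hP
  have hkf : ∫⁻ y, k y * f y ^ p.toReal ∂ν ≤ g * eLpNorm f p ν ^ p.toReal := by
    rw [eLpNorm_rpow_toReal_eq_lintegral hp0 hpt, ← lintegral_const_mul'' _ (hf.pow_const _)]
    exact lintegral_mono_ae (hg.mono fun y hy => by gcongr)
  calc ∫⁻ y, k y * f y ∂ν
      ≤ (∫⁻ y, k y ∂ν) ^ (1 - p.toReal⁻¹) * (∫⁻ y, k y * f y ^ p.toReal ∂ν) ^ p.toReal⁻¹ :=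
        lintegral_mul_le_rpow_mul_lintegral_rpow hk hf hP
    _ ≤ A ^ (1 - p.toReal⁻¹) * (g * eLpNorm f p ν ^ p.toReal) ^ p.toReal⁻¹ := by
        gcongr
        exact sub_nonneg.2 (inv_le_one_of_one_le₀ hP)
    _ = A ^ (1 - p.toReal⁻¹) * g ^ p.toReal⁻¹ * eLpNorm f p ν := by
        rw [ENNReal.mul_rpow_of_nonneg _ _ (inv_nonneg.2 hP0.le), ENNReal.rpow_rpow_inv hP0.ne',
          mul_assoc]

theorem eLpNorm_lintegral_mul_le_of_le {K : X → Y → ℝ≥0∞} (hK : Measurable (Function.uncurry K))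
    {f : Y → ℝ≥0∞} (hf : Measurable f) {p q g : ℝ≥0∞} (hp : 1 ≤ p)
    (hg : ∀ᵐ x ∂μ, ∀ᵐ y ∂ν, K x y ≤ g) :
    eLpNorm (fun x => ∫⁻ y, K x y * f y ∂ν) q μ ≤
      g * ν univ ^ (1 - p.toReal⁻¹) * μ univ ^ q.toReal⁻¹ * eLpNorm f p ν := by
  have hpinv : 0 ≤ 1 - p.toReal⁻¹ := sub_nonneg.2 (toReal_inv_le_one hp)
  have hpoint : ∀ᵐ x ∂μ, ‖∫⁻ y, K x y * f y ∂ν‖ₑ ≤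
      g * ν univ ^ (1 - p.toReal⁻¹) * eLpNorm f p ν := by
    filter_upwards [hg] with x hx
    have hA : ∫⁻ y, K x y ∂ν ≤ g * ν univ := (lintegral_mono_ae hx).trans_eq (lintegral_const g)
    refine (lintegral_mul_le_mul_eLpNorm hK.of_uncurry_left.aemeasurable hf.aemeasurable hp hA
      hx).trans_eq ?_
    rw [ENNReal.mul_rpow_of_nonneg _ _ hpinv, mul_right_comm (g ^ _),
      ← ENNReal.rpow_add_of_nonneg _ _ hpinv (inv_nonneg.2 toReal_nonneg), sub_add_cancel,
      ENNReal.rpow_one]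
  refine (eLpNorm_le_of_ae_enorm_bound hpoint).trans_eq ?_
  rw [smul_eq_mul]
  ring

variable [SFinite μ] [SFinite ν]

theorem eLpNorm_lintegral_mul_le_schur {K : X → Y → ℝ≥0∞} (hK : Measurable (Function.uncurry K))
    {f : Y → ℝ≥0∞} (hf : Measurable f) {p A B : ℝ≥0∞} (hp : 1 ≤ p)
    (hA : ∀ x, ∫⁻ y, K x y ∂ν ≤ A) (hB : ∀ y, ∫⁻ x, K x y ∂μ ≤ B) :
    eLpNorm (fun x => ∫⁻ y, K x y * f y ∂ν) p μ ≤
      A ^ (1 - p.toReal⁻¹) * B ^ p.toReal⁻¹ * eLpNorm f p ν := by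
  rcases eq_or_ne p ⊤ with rfl | hpt
  · refine eLpNormEssSup_le_of_ae_enorm_bound (Eventually.of_forall fun x => ?_)
    simpa only [enorm_eq_self, toReal_top, _root_.inv_zero, ENNReal.rpow_zero] using
      lintegral_mul_le_mul_eLpNorm hK.of_uncurry_left.aemeasurable hf.aemeasurable le_top (hA x)
        (g := ⊤) (Eventually.of_forall fun y => le_top)
  have hp0 : p ≠ 0 := (one_pos.trans_le hp).ne'
  have hP : 1 ≤ p.toReal := ENNReal.toReal_mono hpt hp
  have hP0 : 0 < p.toReal := one_pos.trans_le hP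
  have hKf : Measurable fun z : X × Y => K z.1 z.2 * f z.2 ^ p.toReal :=
    hK.mul ((hf.pow_const _).comp measurable_snd)
  have hpoint (x : X) : (∫⁻ y, K x y * f y ∂ν) ^ p.toReal ≤
      A ^ (p.toReal - 1) * ∫⁻ y, K x y * f y ^ p.toReal ∂ν := by
    have h := ENNReal.rpow_le_rpow (lintegral_mul_le_rpow_mul_lintegral_rpow
      (hK.of_uncurry_left (x := x)).aemeasurable hf.aemeasurable (ν := ν) hP) hP0.le
    rw [ENNReal.mul_rpow_of_nonneg _ _ hP0.le, ← ENNReal.rpow_mul, ENNReal.rpow_inv_rpow hP0.ne',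
      sub_mul, one_mul, inv_mul_cancel₀ hP0.ne'] at h
    exact h.trans (mul_le_mul_left (ENNReal.rpow_le_rpow (hA x) (sub_nonneg.2 hP)) _)
  rw [← ENNReal.rpow_le_rpow_iff hP0, eLpNorm_rpow_toReal_eq_lintegral hp0 hpt,
    ENNReal.mul_rpow_of_nonneg _ _ hP0.le, ENNReal.mul_rpow_of_nonneg _ _ hP0.le,
    ← ENNReal.rpow_mul, ENNReal.rpow_inv_rpow hP0.ne', sub_mul, one_mul, inv_mul_cancel₀ hP0.ne',
    eLpNorm_rpow_toReal_eq_lintegral hp0 hpt, mul_assoc]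
  calc ∫⁻ x, (∫⁻ y, K x y * f y ∂ν) ^ p.toReal ∂μ
      ≤ ∫⁻ x, A ^ (p.toReal - 1) * ∫⁻ y, K x y * f y ^ p.toReal ∂ν ∂μ := lintegral_mono hpoint
    _ = A ^ (p.toReal - 1) * ∫⁻ y, (∫⁻ x, K x y ∂μ) * f y ^ p.toReal ∂ν := by
        rw [lintegral_const_mul _ hKf.lintegral_prod_right',
          lintegral_lintegral_swap hKf.aemeasurable]
        simp only [lintegral_mul_const _ hK.of_uncurry_right]
    _ ≤ A ^ (p.toReal - 1) * ∫⁻ y, B * f y ^ p.toReal ∂ν := by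
        gcongr with y
        exact hB y
    _ = A ^ (p.toReal - 1) * (B * ∫⁻ y, f y ^ p.toReal ∂ν) := by
        rw [lintegral_const_mul _ (hf.pow_const _)]

theorem eLpNorm_lintegral_mul_le_young {K : X → Y → ℝ≥0∞} (hK : Measurable (Function.uncurry K))
    {f : Y → ℝ≥0∞} (hf : Measurable f) {p q A B g : ℝ≥0∞} (hp : 1 ≤ p) (hpq : p ≤ q)
    (hA : ∀ x, ∫⁻ y, K x y ∂ν ≤ A) (hB : ∀ y, ∫⁻ x, K x y ∂μ ≤ B)
    (hg : ∀ᵐ x ∂μ, ∀ᵐ y ∂ν, K x y ≤ g) :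
    eLpNorm (fun x => ∫⁻ y, K x y * f y ∂ν) q μ ≤
      A ^ (1 - p.toReal⁻¹) * B ^ q.toReal⁻¹ * g ^ (p.toReal⁻¹ - q.toReal⁻¹) * eLpNorm f p ν := by
  rcases eq_or_ne p ⊤ with rfl | hpt
  · obtain rfl : q = ⊤ := top_le_iff.1 hpq
    simpa using eLpNorm_lintegral_mul_le_schur hK hf le_top hA hB
  have hP : 1 ≤ p.toReal := ENNReal.toReal_mono hpt hp
  have hP0 : 0 < p.toReal := one_pos.trans_le hP
  have hθ0 : 0 ≤ p.toReal / q.toReal := by positivity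
  have hθ1 : 0 ≤ 1 - p.toReal / q.toReal := by
    rcases eq_or_ne q ⊤ with rfl | hqt
    · simp
    · exact sub_nonneg.2 (div_le_one_of_le₀ (ENNReal.toReal_mono hqt hpq) toReal_nonneg)
  have hKf : Measurable fun x => ∫⁻ y, K x y * f y ∂ν :=
    (hK.mul (hf.comp measurable_snd)).lintegral_prod_right'
  have hsup : ∀ᵐ x ∂μ, ∫⁻ y, K x y * f y ∂ν ≤
      A ^ (1 - p.toReal⁻¹) * g ^ p.toReal⁻¹ * eLpNorm f p ν :=
    hg.mono fun x hx => lintegral_mul_le_mul_eLpNorm hK.of_uncurry_left.aemeasurable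
      hf.aemeasurable hp (hA x) hx
  calc eLpNorm (fun x => ∫⁻ y, K x y * f y ∂ν) q μ
      ≤ (A ^ (1 - p.toReal⁻¹) * g ^ p.toReal⁻¹ * eLpNorm f p ν) ^ (1 - p.toReal / q.toReal) *
        (A ^ (1 - p.toReal⁻¹) * B ^ p.toReal⁻¹ * eLpNorm f p ν) ^ (p.toReal / q.toReal) := by
        refine (eLpNorm_le_rpow_mul_eLpNorm_rpow hKf.aemeasurable
          (one_pos.trans_le hp).ne' hpq hsup).trans ?_
        gcongr
        exact eLpNorm_lintegral_mul_le_schur hK hf hp hA hB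
    _ = (A ^ (1 - p.toReal⁻¹) * eLpNorm f p ν) ^ (1 - p.toReal / q.toReal + p.toReal / q.toReal) *
        ((B ^ p.toReal⁻¹) ^ (p.toReal / q.toReal) *
          (g ^ p.toReal⁻¹) ^ (1 - p.toReal / q.toReal)) := by
        rw [ENNReal.rpow_add_of_nonneg _ _ hθ1 hθ0]
        simp only [ENNReal.mul_rpow_of_nonneg _ _ hθ1, ENNReal.mul_rpow_of_nonneg _ _ hθ0]
        ring
    _ = _ := by
        rw [sub_add_cancel, ENNReal.rpow_one, ← ENNReal.rpow_mul, ← ENNReal.rpow_mul, mul_sub,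
          mul_one, mul_div, inv_mul_cancel₀ hP0.ne', one_div]
        ring

end SchurYoung

section HeatKernel

variable {n : ℕ}

theorem heatKernel_nonneg {t : ℝ} (ht : 0 < t) (x y : Euc n) : 0 ≤ heatKernel n t x y := by
  unfold heatKernel
  positivity

theorem heatKernel_comm (t : ℝ) (x y : Euc n) : heatKernel n t x y = heatKernel n t y x := by
  simp only [heatKernel, norm_sub_rev x y]

theorem exp_neg_sq_div_four_le_rpow_neg {N z : ℝ} (hN : 0 < N) (hz : 0 < z) :
    Real.exp (-z ^ 2 / 4) ≤ (2 * N) ^ (N / 2) * z ^ (-N) := by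
  have hexp : z ^ 2 / (2 * N) ≤ Real.exp (z ^ 2 / (2 * N)) := by
    linarith [Real.add_one_le_exp (z ^ 2 / (2 * N))]
  have hpow := Real.rpow_le_rpow (by positivity) hexp (show 0 ≤ N / 2 by positivity)
  have hzN : (z ^ 2) ^ (N / 2) = z ^ N := by
    rw [← Real.rpow_natCast, ← Real.rpow_mul hz.le, Nat.cast_ofNat, mul_div_cancel₀ N two_ne_zero]
  have hexpN : z ^ 2 / (2 * N) * (N / 2) = z ^ 2 / 4 := by
    field_simp
    norm_num
  rw [← Real.exp_mul, Real.div_rpow (by positivity) (by positivity), hzN, hexpN,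
    div_le_iff₀ (by positivity)] at hpow
  rw [neg_div, Real.exp_neg, Real.rpow_neg hz.le, ← div_eq_mul_inv, le_div_iff₀ (by positivity),
    inv_mul_le_iff₀ (by positivity)]
  exact hpow

theorem heatKernel_le_rpow {t : ℝ} (ht : 0 < t) (x y : Euc n) :
    heatKernel n t x y ≤ t ^ (-(n : ℝ) / 2) := by
  have hexp : Real.exp (-‖x - y‖ ^ 2 / (4 * t)) ≤ 1 :=
    Real.exp_le_one_iff.2 (div_nonpos_of_nonpos_of_nonneg (by simp) (by positivity))
  have hpow : (4 * Real.pi * t) ^ (-(n : ℝ) / 2) ≤ t ^ (-(n : ℝ) / 2) :=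
    Real.rpow_le_rpow_of_nonpos ht (by nlinarith [Real.pi_gt_three])
      (div_nonpos_of_nonpos_of_nonneg (by simp) zero_le_two)
  exact (mul_le_mul hpow hexp (Real.exp_pos _).le (by positivity)).trans_eq (mul_one _)

theorem exists_heatKernel_le_rpow_neg_of_le_norm_sub (n : ℕ) {N : ℝ} (hN : 0 ≤ N) :
    ∃ C : ℝ, 0 < C ∧ ∀ {t ρ : ℝ} {x y : Euc n}, 0 < t → 0 < ρ → ρ ≤ ‖x - y‖ →
      heatKernel n t x y ≤ C * t ^ (-(n : ℝ) / 2) * (ρ / √t) ^ (-N) := by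
  rcases hN.eq_or_lt with rfl | hN
  · refine ⟨1, one_pos, fun ht _ _ => ?_⟩
    simpa using heatKernel_le_rpow ht _ _
  refine ⟨(4 * Real.pi) ^ (-(n : ℝ) / 2) * (2 * N) ^ (N / 2), by positivity,
    fun {t ρ x y} ht hρ hxy => ?_⟩
  have hexp : Real.exp (-‖x - y‖ ^ 2 / (4 * t)) ≤ Real.exp (-(ρ / √t) ^ 2 / 4) := by
    rw [div_pow, Real.sq_sqrt ht.le, neg_div, neg_div, div_div, mul_comm t 4]
    gcongr
  calc heatKernel n t x y
      ≤ (4 * Real.pi * t) ^ (-(n : ℝ) / 2) * ((2 * N) ^ (N / 2) * (ρ / √t) ^ (-N)) := by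
        unfold heatKernel
        gcongr
        exact hexp.trans (exp_neg_sq_div_four_le_rpow_neg hN (by positivity))
    _ = _ := by
        rw [Real.mul_rpow (by positivity) ht.le]
        ring

/-- The heat kernel with values in `[0, ∞]`, against which every nonnegative function can be
integrated. -/
def eHeatKernel (n : ℕ) (t : ℝ) (x y : Euc n) : ℝ≥0∞ :=
  ENNReal.ofReal (heatKernel n t x y)

@[fun_prop]
theorem measurable_eHeatKernel {Z : Type*} [MeasurableSpace Z] {t : Z → ℝ} {x y : Z → Euc n}
    (ht : Measurable t) (hx : Measurable x) (hy : Measurable y) :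
    Measurable fun z => eHeatKernel n (t z) (x z) (y z) := by
  unfold eHeatKernel heatKernel
  fun_prop

theorem measurable_uncurry_eHeatKernel (n : ℕ) (t : ℝ) :
    Measurable (Function.uncurry (eHeatKernel n t)) :=
  measurable_eHeatKernel measurable_const measurable_fst measurable_snd

theorem lintegral_eHeatKernel_right {t : ℝ} (ht : 0 < t) (x : Euc n) :
    ∫⁻ y, eHeatKernel n t x y = 1 := by
  set G : Euc n → ℝ := fun z =>
    (4 * Real.pi * t) ^ (-(n : ℝ) / 2) * Real.exp (-(1 / (4 * t)) * ‖z‖ ^ 2)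
  have hG : ∫ z, G z = 1 := by
    rw [integral_const_mul,
      GaussianFourier.integral_rexp_neg_mul_sq_norm (V := Euc n) (by positivity : 0 < 1 / (4 * t)),
      finrank_euclideanSpace_fin, show Real.pi / (1 / (4 * t)) = 4 * Real.pi * t by field_simp,
      ← Real.rpow_add (by positivity), neg_div, neg_add_cancel, Real.rpow_zero]
  have hGint : Integrable G := not_imp_comm.1 integral_undef (by simp [hG])
  calc ∫⁻ y, eHeatKernel n t x y = ∫⁻ y, ENNReal.ofReal (G (x - y)) := by
        simp only [eHeatKernel, heatKernel, G, neg_mul, one_div_mul_eq_div, neg_div]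
    _ = ∫⁻ z, ENNReal.ofReal (G z) :=
        lintegral_sub_left_eq_self (fun z => ENNReal.ofReal (G z)) x
    _ = 1 := by
        rw [← ofReal_integral_eq_lintegral_ofReal hGint
          (Eventually.of_forall fun z => by positivity), hG, ENNReal.ofReal_one]

theorem lintegral_eHeatKernel_left {t : ℝ} (ht : 0 < t) (y : Euc n) :
    ∫⁻ x, eHeatKernel n t x y = 1 := by
  simpa only [eHeatKernel, heatKernel_comm t y] using lintegral_eHeatKernel_right ht y

end HeatKernel

section Annuli

variable {n : ℕ}

theorem rpow_le_two_rpow_abs {θ : ℝ} (hθ : 2⁻¹ ≤ θ) (hθ' : θ ≤ 2) (γ : ℝ) : θ ^ γ ≤ 2 ^ |γ| := by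
  rcases le_or_gt 0 γ with hγ | hγ
  · rw [abs_of_nonneg hγ]
    exact Real.rpow_le_rpow (by linarith) hθ' hγ
  · rw [abs_of_neg hγ, Real.rpow_neg zero_le_two, ← Real.inv_rpow zero_le_two]
    exact Real.rpow_le_rpow_of_nonpos (by norm_num) hθ hγ.le

theorem measurableSet_annulus (n : ℕ) (k : ℤ) : MeasurableSet (annulus n k) :=
  (measurableSet_le measurable_const measurable_norm).inter
    (measurableSet_lt measurable_norm measurable_const)

theorem volume_annulus_le (n : ℕ) (k : ℤ) :
    volume (annulus n k) ≤
      ENNReal.ofReal (volume.real (Metric.ball (0 : Euc n) 1) * ((2 : ℝ) ^ k) ^ (n : ℝ)) := by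
  calc volume (annulus n k) ≤ volume (Metric.ball (0 : Euc n) ((2 : ℝ) ^ k)) :=
        measure_mono fun x hx => by simpa using hx.2
    _ = _ := by
        rw [Measure.addHaar_ball_of_pos _ _ (by positivity), finrank_euclideanSpace_fin,
          ENNReal.ofReal_mul measureReal_nonneg, measureReal_def,
          ENNReal.ofReal_toReal measure_ball_lt_top.ne, Real.rpow_natCast, mul_comm]

theorem pairwise_disjoint_annulus (n : ℕ) : Pairwise (Function.onFun Disjoint (annulus n)) := by
  refine (pairwise_disjoint_on (annulus n)).2 fun i j hij => Set.disjoint_left.2 fun x hi hj => ?_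
  have hpow : (2 : ℝ) ^ i ≤ 2 ^ (j - 1) := zpow_le_zpow_right₀ one_le_two (Int.le_sub_one_of_lt hij)
  exact absurd hi.2 (not_lt.2 (hpow.trans hj.1))

theorem iUnion_annulus (n : ℕ) : ⋃ k, annulus n k = {0}ᶜ := by
  ext x
  simp only [mem_iUnion, mem_compl_iff, mem_singleton_iff]
  constructor
  · rintro ⟨k, hk⟩ rfl
    exact absurd hk.1 (not_le.2 (by simpa using _root_.zpow_pos (two_pos (α := ℝ)) (k - 1)))
  · intro hx
    obtain ⟨k, hk⟩ := exists_mem_Ico_zpow (norm_pos_iff.2 hx) one_lt_two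
    exact ⟨k + 1, by simpa [annulus] using hk⟩

theorem restrict_iUnion_annulus [NeZero n] :
    (volume : Measure (Euc n)).restrict (⋃ k, annulus n k) = volume := by
  rw [iUnion_annulus, restrict_compl_singleton]

theorem lintegral_eq_tsum_annulus [NeZero n] (f : Euc n → ℝ≥0∞) :
    ∫⁻ y, f y = ∑' k, ∫⁻ y in annulus n k, f y := by
  rw [← lintegral_iUnion (measurableSet_annulus n) (pairwise_disjoint_annulus n),
    restrict_iUnion_annulus]

theorem two_zpow_div_four_le_norm_sub {j k : ℤ} (hjk : j + 2 ≤ k) {x y : Euc n}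
    (hx : x ∈ annulus n j) (hy : y ∈ annulus n k) : (2 : ℝ) ^ k / 4 ≤ ‖x - y‖ := by
  have hjle : (2 : ℝ) ^ j ≤ 2 ^ (k - 2) := zpow_le_zpow_right₀ one_le_two (by omega)
  have hquarter : (2 : ℝ) ^ (k - 2) = 2 ^ k / 4 := by
    rw [zpow_sub₀ two_ne_zero]
    norm_num
  have hhalf : (2 : ℝ) ^ (k - 1) = 2 ^ k / 2 := zpow_sub_one₀ two_ne_zero k
  have hsub : ‖y‖ - ‖x‖ ≤ ‖x - y‖ := norm_sub_rev x y ▸ norm_sub_norm_le y x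
  linarith [hx.2, hy.1]

theorem max_two_zpow_div_four_le_norm_sub {j k : ℤ} (hjk : 2 ≤ |k - j|) {x y : Euc n}
    (hx : x ∈ annulus n j) (hy : y ∈ annulus n k) :
    max ((2 : ℝ) ^ j) (2 ^ k) / 4 ≤ ‖x - y‖ := by
  rcases le_abs.1 hjk with h | h
  · rw [max_eq_right (zpow_le_zpow_right₀ one_le_two (by omega))]
    exact two_zpow_div_four_le_norm_sub (by omega) hx hy
  · rw [max_eq_left (zpow_le_zpow_right₀ one_le_two (by omega)), norm_sub_rev]
    exact two_zpow_div_four_le_norm_sub (by omega) hy hx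

theorem norm_rpow_le_of_mem_annulus (γ : ℝ) {k : ℤ} {x : Euc n} (hx : x ∈ annulus n k) :
    ‖x‖ ^ γ ≤ 2 ^ |γ| * ((2 : ℝ) ^ k) ^ γ := by
  have hk : (0 : ℝ) < 2 ^ k := by positivity
  have hlow : (2 : ℝ) ^ k / 2 ≤ ‖x‖ := (zpow_sub_one₀ two_ne_zero k).symm.trans_le hx.1
  rw [← div_le_iff₀ (by positivity), ← Real.div_rpow (norm_nonneg x) hk.le]
  refine rpow_le_two_rpow_abs ?_ ?_ γ
  · rw [le_div_iff₀ hk]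
    linarith
  · rw [div_le_iff₀ hk]
    linarith [hx.2]

end Annuli

section HerzSupNorm

variable {n : ℕ}

/-- The norm of the weak-type Herz space `K̇^s_{q,∞}`, the largest of the spaces `K̇^s_{q,r}`. It
equals `herzNorm n s q ⊤`, but is also defined for functions with values in `[0, ∞]`. -/
def herzSupNorm {E : Type*} [ENorm E] (s : ℝ) (q : ℝ≥0∞) (f : Euc n → E) : ℝ≥0∞ :=
  ⨆ j : ℤ, ENNReal.ofReal (((2 : ℝ) ^ j) ^ s) * eLpNorm f q (volume.restrict (annulus n j))

theorem mul_eLpNorm_annulus_le_herzSupNorm {E : Type*} [ENorm E] (s : ℝ) (q : ℝ≥0∞)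
    (f : Euc n → E) (j : ℤ) :
    ENNReal.ofReal (((2 : ℝ) ^ j) ^ s) * eLpNorm f q (volume.restrict (annulus n j)) ≤
      herzSupNorm s q f :=
  le_iSup (fun j : ℤ => ENNReal.ofReal (((2 : ℝ) ^ j) ^ s) *
    eLpNorm f q (volume.restrict (annulus n j))) j

theorem herzSupNorm_mono_enorm {E E' : Type*} [ENorm E] [ENorm E'] {f : Euc n → E}
    {g : Euc n → E'} (s : ℝ) (q : ℝ≥0∞) (hfg : ∀ᵐ x, ‖f x‖ₑ ≤ ‖g x‖ₑ) :
    herzSupNorm s q f ≤ herzSupNorm s q g :=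
  iSup_mono fun _ => mul_le_mul_right (eLpNorm_mono_enorm_ae (ae_restrict_of_ae hfg)) _

theorem herzSupNorm_le_herzNorm (s : ℝ) (q : ℝ≥0∞) {r : ℝ≥0∞} (hr : 0 < r) (f : Euc n → ℝ) :
    herzSupNorm s q f ≤ herzNorm n s q r f := by
  refine iSup_le fun j => ?_
  rw [← eLpNorm_indicator_eq_eLpNorm_restrict (measurableSet_annulus n j), ← Real.rpow_intCast,
    ← Real.rpow_mul zero_le_two]
  unfold herzNorm
  split_ifs with hrt
  · exact le_iSup (fun j : ℤ => ENNReal.ofReal ((2 : ℝ) ^ ((j : ℝ) * s)) *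
      eLpNorm ((annulus n j).indicator f) q volume) j
  · rw [one_div, ENNReal.le_rpow_inv_iff (ENNReal.toReal_pos hr.ne' hrt)]
    exact ENNReal.le_tsum (f := fun j : ℤ => (ENNReal.ofReal ((2 : ℝ) ^ ((j : ℝ) * s)) *
      eLpNorm ((annulus n j).indicator f) q volume) ^ r.toReal) j

theorem herzSupNorm_add_le {E : Type*} [NormedAddCommGroup E] {f g : Euc n → E}
    (hf : AEStronglyMeasurable f) (hg : AEStronglyMeasurable g) (s : ℝ) {q : ℝ≥0∞} (hq : 1 ≤ q) :
    herzSupNorm s q (f + g) ≤ herzSupNorm s q f + herzSupNorm s q g := by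
  refine iSup_le fun j => ?_
  calc _ ≤ _ * (eLpNorm f q _ + eLpNorm g q _) := by
        gcongr
        exact eLpNorm_add_le hf.restrict hg.restrict hq
    _ ≤ _ := by
        rw [mul_add]
        gcongr <;> exact mul_eLpNorm_annulus_le_herzSupNorm s q _ j

theorem herzSupNorm_const_smul {𝕜 E : Type*} [NormedDivisionRing 𝕜] [NormedAddCommGroup E]
    [Module 𝕜 E] [NormSMulClass 𝕜 E] (c : 𝕜) (s : ℝ) (q : ℝ≥0∞) (f : Euc n → E) :
    herzSupNorm s q (c • f) = ‖c‖ₑ * herzSupNorm s q f := by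
  simp only [herzSupNorm, eLpNorm_const_smul, mul_left_comm _ ‖c‖ₑ, ENNReal.mul_iSup]

theorem herzSupNorm_lintegral_le {Y : Type*} [MeasurableSpace Y] {ν : Measure Y} [SFinite ν]
    {F : Y → Euc n → ℝ≥0∞} (hF : Measurable (Function.uncurry F)) (s : ℝ) {q : ℝ≥0∞}
    (hq : 1 ≤ q) :
    herzSupNorm s q (fun x => ∫⁻ y, F y x ∂ν) ≤ ∫⁻ y, herzSupNorm s q (F y) ∂ν := by
  refine iSup_le fun j => ?_
  calc _ ≤ ENNReal.ofReal (((2 : ℝ) ^ j) ^ s) *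
          ∫⁻ y, eLpNorm (F y) q (volume.restrict (annulus n j)) ∂ν := by
        gcongr
        exact eLpNorm_lintegral_le hF hq
    _ = ∫⁻ y, ENNReal.ofReal (((2 : ℝ) ^ j) ^ s) *
          eLpNorm (F y) q (volume.restrict (annulus n j)) ∂ν :=
        (lintegral_const_mul' _ _ ENNReal.ofReal_ne_top).symm
    _ ≤ _ := lintegral_mono fun y => mul_eLpNorm_annulus_le_herzSupNorm s q (F y) j

theorem ae_eq_zero_of_herzSupNorm_eq_zero [NeZero n] {E : Type*} [NormedAddCommGroup E]
    {f : Euc n → E} (hf : AEStronglyMeasurable f) {s : ℝ} {q : ℝ≥0∞} (hq : q ≠ 0)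
    (h : herzSupNorm s q f = 0) : f =ᵐ[volume] 0 := by
  rw [← restrict_iUnion_annulus (n := n)]
  refine (ae_restrict_iUnion_iff _ _).2 fun j => ?_
  rw [← Filter.EventuallyEq, ← eLpNorm_eq_zero_iff hf.restrict hq]
  have hj : ENNReal.ofReal (((2 : ℝ) ^ j) ^ s) * eLpNorm f q _ = 0 := ENNReal.iSup_eq_zero.1 h j
  exact (mul_eq_zero.1 hj).resolve_left (by simpa using by positivity)

theorem herzSupNorm_norm_rpow_mul_le (γ s : ℝ) (q : ℝ≥0∞) (f : Euc n → ℝ) :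
    herzSupNorm (s - γ) q (fun x => ‖x‖ ^ γ * f x) ≤
      ENNReal.ofReal (2 ^ |γ|) * herzSupNorm s q f := by
  refine iSup_le fun j => ?_
  have hj : (0 : ℝ) < 2 ^ j := by positivity
  have hweight : ∀ᵐ x ∂volume.restrict (annulus n j),
      ‖‖x‖ ^ γ * f x‖ ≤ 2 ^ |γ| * ((2 : ℝ) ^ j) ^ γ * ‖f x‖ := by
    filter_upwards [ae_restrict_mem (measurableSet_annulus n j)] with x hx
    rw [norm_mul, Real.norm_of_nonneg (by positivity)]
    gcongr
    exact norm_rpow_le_of_mem_annulus γ hx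
  calc _ ≤ ENNReal.ofReal (((2 : ℝ) ^ j) ^ (s - γ)) *
          (ENNReal.ofReal (2 ^ |γ| * ((2 : ℝ) ^ j) ^ γ) * eLpNorm f q _) := by
        gcongr
        exact eLpNorm_le_mul_eLpNorm_of_ae_le_mul hweight q
    _ = ENNReal.ofReal (2 ^ |γ|) * (ENNReal.ofReal (((2 : ℝ) ^ j) ^ s) * eLpNorm f q _) := by
        rw [← mul_assoc, ← mul_assoc, ← ENNReal.ofReal_mul (by positivity),
          ← ENNReal.ofReal_mul (by positivity), mul_left_comm, ← Real.rpow_add hj, sub_add_cancel]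
    _ ≤ _ := by
        gcongr
        exact mul_eLpNorm_annulus_le_herzSupNorm s q f j

theorem eLpNorm_norm_rpow_mul_le {X : Type*} [MeasurableSpace X] {μ : Measure X} {α : ℝ}
    (hα : 1 < α) (q : ℝ≥0∞) {V w : X → ℝ} (hV : AEStronglyMeasurable V μ)
    (hw : AEStronglyMeasurable w μ) :
    eLpNorm (fun x => ‖V x‖ ^ (α - 1) * w x) (q / ENNReal.ofReal α) μ ≤
      eLpNorm V q μ ^ (α - 1) * eLpNorm w q μ := by
  have hα0 : ENNReal.ofReal α ≠ 0 := (ENNReal.ofReal_pos.2 (one_pos.trans hα)).ne'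
  have hα1 : ENNReal.ofReal (α - 1) ≠ 0 := (ENNReal.ofReal_pos.2 (sub_pos.2 hα)).ne'
  have hαadd : ENNReal.ofReal α = ENNReal.ofReal (α - 1) + 1 := by
    rw [← ENNReal.ofReal_one, ← ENNReal.ofReal_add (sub_nonneg.2 hα.le) zero_le_one,
      sub_add_cancel]
  have : ENNReal.HolderTriple (q / ENNReal.ofReal (α - 1)) q (q / ENNReal.ofReal α) := by
    constructor
    rw [ENNReal.inv_div (.inl ENNReal.ofReal_ne_top) (.inl hα0),
      ENNReal.inv_div (.inl ENNReal.ofReal_ne_top) (.inl hα1), div_eq_mul_inv, div_eq_mul_inv,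
      hαadd, add_mul, one_mul]
  refine (eLpNorm_smul_le_mul_eLpNorm hw (hV.norm.aemeasurable.pow_const _).aestronglyMeasurable
    (p := q / ENNReal.ofReal (α - 1)) (q := q)).trans_eq ?_
  rw [eLpNorm_norm_rpow V (sub_pos.2 hα), ENNReal.div_mul_cancel hα1 ENNReal.ofReal_ne_top]

theorem herzSupNorm_norm_rpow_mul_le_mul {α : ℝ} (hα : 1 < α) (s : ℝ) (q : ℝ≥0∞)
    {V w : Euc n → ℝ} (hV : AEStronglyMeasurable V) (hw : AEStronglyMeasurable w) :
    herzSupNorm (α * s) (q / ENNReal.ofReal α) (fun x => ‖V x‖ ^ (α - 1) * w x) ≤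
      herzSupNorm s q V ^ (α - 1) * herzSupNorm s q w := by
  have hα1 : 0 ≤ α - 1 := sub_nonneg.2 hα.le
  refine iSup_le fun j => ?_
  set W : ℝ≥0∞ := ENNReal.ofReal (((2 : ℝ) ^ j) ^ s)
  have hW : ENNReal.ofReal (((2 : ℝ) ^ j) ^ (α * s)) = W ^ (α - 1) * W := by
    rw [ENNReal.ofReal_rpow_of_nonneg (by positivity) hα1, ← ENNReal.ofReal_mul (by positivity),
      ← Real.rpow_mul (by positivity), ← Real.rpow_add (by positivity)]
    congr 2
    ring
  calc _ ≤ W ^ (α - 1) * W * (eLpNorm V q _ ^ (α - 1) * eLpNorm w q _) := by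
        rw [hW]
        gcongr
        exact eLpNorm_norm_rpow_mul_le hα q hV.restrict hw.restrict
    _ = (W * eLpNorm V q _) ^ (α - 1) * (W * eLpNorm w q _) := by
        rw [ENNReal.mul_rpow_of_nonneg _ _ hα1]
        ring
    _ ≤ _ := by
        gcongr <;> exact mul_eLpNorm_annulus_le_herzSupNorm s q _ j

end HerzSupNorm

section Nonlinearity

theorem rpow_add_mul_sub_le_rpow {α a b : ℝ} (hα : 1 ≤ α) (ha : 0 < a) (hb : 0 ≤ b) :
    a ^ α + α * a ^ (α - 1) * (b - a) ≤ b ^ α := by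
  have hbern := one_add_mul_self_le_rpow_one_add (s := b / a - 1)
    (by linarith [div_nonneg hb ha.le]) hα
  rw [add_sub_cancel, Real.div_rpow hb ha.le, le_div_iff₀ (by positivity)] at hbern
  calc a ^ α + α * a ^ (α - 1) * (b - a) = (1 + α * (b / a - 1)) * a ^ α := by
        rw [Real.rpow_sub_one ha.ne']
        field_simp
    _ ≤ b ^ α := hbern

theorem abs_rpow_mul_sub_rpow_mul_le {α a b : ℝ} (hα : 1 < α) (hab : |b| ≤ |a|) :
    |(|a| ^ (α - 1) * a - |b| ^ (α - 1) * b)| ≤ α * |a| ^ (α - 1) * |a - b| := by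
  rcases eq_or_ne a 0 with rfl | ha
  · obtain rfl : b = 0 := by simpa using hab
    simp
  have hpow : |b| ^ (α - 1) ≤ |a| ^ (α - 1) :=
    Real.rpow_le_rpow (abs_nonneg b) hab (sub_nonneg.2 hα.le)
  have hα0 : α - 1 + 1 ≠ 0 := by linarith
  have hsnd : (|a| ^ (α - 1) - |b| ^ (α - 1)) * |b| ≤ (α - 1) * |a| ^ (α - 1) * (|a| - |b|) := by
    have htangent := rpow_add_mul_sub_le_rpow hα.le (abs_pos.2 ha) (abs_nonneg b)
    rw [← sub_add_cancel α 1, Real.rpow_add_one' (abs_nonneg a) hα0,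
      Real.rpow_add_one' (abs_nonneg b) hα0, sub_add_cancel] at htangent
    linarith
  calc |(|a| ^ (α - 1) * a - |b| ^ (α - 1) * b)|
      = |(|a| ^ (α - 1) * (a - b) + (|a| ^ (α - 1) - |b| ^ (α - 1)) * b)| := by ring_nf
    _ ≤ |a| ^ (α - 1) * |a - b| + (|a| ^ (α - 1) - |b| ^ (α - 1)) * |b| := by
        refine (abs_add_le _ _).trans_eq ?_
        rw [abs_mul, abs_mul, abs_of_nonneg (by positivity), abs_of_nonneg (sub_nonneg.2 hpow)]
    _ ≤ |a| ^ (α - 1) * |a - b| + (α - 1) * |a| ^ (α - 1) * |a - b| := by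
        grw [hsnd, abs_sub_abs_le_abs_sub a b]
        exact mul_nonneg (sub_nonneg.2 hα.le) (by positivity)
    _ = α * |a| ^ (α - 1) * |a - b| := by ring

theorem abs_abs_rpow_mul_sub_le {α : ℝ} (hα : 1 < α) (a b : ℝ) :
    |(|a| ^ (α - 1) * a - |b| ^ (α - 1) * b)| ≤ α * (|a| + |b|) ^ (α - 1) * |a - b| := by
  rcases le_total |b| |a| with h | h
  · refine (abs_rpow_mul_sub_rpow_mul_le hα h).trans ?_
    gcongr
    exact le_add_of_nonneg_right (abs_nonneg b)
  · rw [abs_sub_comm, abs_sub_comm a]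
    refine (abs_rpow_mul_sub_rpow_mul_le hα h).trans ?_
    gcongr
    exact le_add_of_nonneg_left (abs_nonneg a)

variable {n : ℕ} {α : ℝ} {q : ℝ≥0∞}

theorem enorm_nonlin_sub_le (hα : 1 < α) (γ : ℝ) (v w : Euc n → ℝ) (x : Euc n) :
    ‖nonlin n γ α v x - nonlin n γ α w x‖ₑ ≤
      ‖‖x‖ ^ γ * (‖|v x| + |w x|‖ ^ (α - 1) * (α * (v x - w x)))‖ₑ := by
  have hvw : 0 ≤ |v x| + |w x| := by positivity
  rw [enorm_le_iff_norm_le, nonlin, nonlin, mul_assoc, mul_assoc, ← mul_sub, norm_mul, norm_mul,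
    norm_mul, norm_mul, Real.norm_of_nonneg hvw, Real.norm_of_nonneg (by positivity : 0 ≤ α),
    Real.norm_of_nonneg (Real.rpow_nonneg hvw _), ← mul_assoc _ α, mul_comm _ α]
  gcongr
  exact abs_abs_rpow_mul_sub_le hα (v x) (w x)

theorem one_le_div_ofReal (hα : 1 < α) (hq : ENNReal.ofReal α ≤ q) :
    1 ≤ q / ENNReal.ofReal α := by
  rwa [ENNReal.le_div_iff_mul_le
    (.inl (ENNReal.ofReal_pos.2 (one_pos.trans hα)).ne') (.inl ENNReal.ofReal_ne_top), one_mul]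

theorem div_ofReal_le_self (hα : 1 < α) : q / ENNReal.ofReal α ≤ q :=
  ENNReal.div_le_of_le_mul (le_mul_of_one_le_right' (ENNReal.one_le_ofReal.2 hα.le))

theorem herzSupNorm_nonlin_sub_le (hα : 1 < α) (hq : ENNReal.ofReal α ≤ q) (γ s : ℝ)
    {v w : Euc n → ℝ} (hv : Measurable v) (hw : Measurable w) :
    herzSupNorm (α * s - γ) (q / ENNReal.ofReal α)
        (fun x => ‖nonlin n γ α v x - nonlin n γ α w x‖ₑ) ≤
      ENNReal.ofReal (2 ^ |γ|) * ((herzSupNorm s q v + herzSupNorm s q w) ^ (α - 1) *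
        (ENNReal.ofReal α * herzSupNorm s q (v - w))) := by
  have hq1 : 1 ≤ q := (ENNReal.one_le_ofReal.2 hα.le).trans hq
  have hV : AEStronglyMeasurable (|v| + |w|) := (hv.norm.add hw.norm).aestronglyMeasurable
  have hvw : herzSupNorm s q (|v| + |w|) ≤ herzSupNorm s q v + herzSupNorm s q w := by
    refine (herzSupNorm_add_le hv.norm.aestronglyMeasurable hw.norm.aestronglyMeasurable s
      hq1).trans (add_le_add ?_ ?_) <;>
    exact herzSupNorm_mono_enorm s q (Eventually.of_forall fun x => by simp)
  calc herzSupNorm (α * s - γ) (q / ENNReal.ofReal α)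
        (fun x => ‖nonlin n γ α v x - nonlin n γ α w x‖ₑ)
      ≤ herzSupNorm (α * s - γ) (q / ENNReal.ofReal α)
          (fun x => ‖x‖ ^ γ * (‖(|v| + |w|) x‖ ^ (α - 1) * (α • (v - w)) x)) :=
        herzSupNorm_mono_enorm _ _ (Eventually.of_forall (enorm_nonlin_sub_le hα γ v w))
    _ ≤ ENNReal.ofReal (2 ^ |γ|) * (herzSupNorm s q (|v| + |w|) ^ (α - 1) *
          herzSupNorm s q (α • (v - w))) := by
        grw [herzSupNorm_norm_rpow_mul_le, herzSupNorm_norm_rpow_mul_le_mul hα s q hV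
          ((hv.sub hw).const_smul α).aestronglyMeasurable]
    _ ≤ _ := by
        rw [herzSupNorm_const_smul, Real.enorm_of_nonneg (one_pos.trans hα).le]
        gcongr

end Nonlinearity

section Smoothing

variable {n : ℕ} {s s' a b : ℝ} {p q : ℝ≥0∞}

theorem mul_eLpNorm_annulus_lintegral_mul_le {K : Euc n → Euc n → ℝ≥0∞}
    (hK : Measurable (Function.uncurry K)) {f : Euc n → ℝ≥0∞} (hf : Measurable f) (hp : 1 ≤ p)
    (ha : s + n * q.toReal⁻¹ = a) (hb : n - s' - n * p.toReal⁻¹ = b) {g : ℝ} (hg : 0 ≤ g)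
    {j k : ℤ} (hKg : ∀ x ∈ annulus n j, ∀ y ∈ annulus n k, K x y ≤ ENNReal.ofReal g) :
    ENNReal.ofReal (((2 : ℝ) ^ j) ^ s) *
        eLpNorm (fun x => ∫⁻ y in annulus n k, K x y * f y) q (volume.restrict (annulus n j)) ≤
      ENNReal.ofReal (volume.real (Metric.ball (0 : Euc n) 1) ^ (1 - p.toReal⁻¹ + q.toReal⁻¹) *
          (g * (((2 : ℝ) ^ k) ^ b * ((2 : ℝ) ^ j) ^ a))) *
        (ENNReal.ofReal (((2 : ℝ) ^ k) ^ s') * eLpNorm f p (volume.restrict (annulus n k))) := by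
  have hω : 0 < volume.real (Metric.ball (0 : Euc n) 1) :=
    ENNReal.toReal_pos (Metric.measure_ball_pos _ _ one_pos).ne' measure_ball_lt_top.ne
  set ω := volume.real (Metric.ball (0 : Euc n) 1)
  set X : ℝ := 2 ^ j
  set Y : ℝ := 2 ^ k
  have hX : 0 < X := by positivity
  have hY : 0 < Y := by positivity
  have hpinv : 0 ≤ 1 - p.toReal⁻¹ := sub_nonneg.2 (toReal_inv_le_one hp)
  have hvol (i : ℤ) {θ : ℝ} (hθ : 0 ≤ θ) :
      volume (annulus n i) ^ θ ≤ ENNReal.ofReal (ω ^ θ * ((2 : ℝ) ^ i) ^ (n * θ)) := by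
    refine (ENNReal.rpow_le_rpow (volume_annulus_le n i) hθ).trans_eq ?_
    rw [ENNReal.ofReal_rpow_of_nonneg (by positivity) hθ, Real.mul_rpow (by positivity)
      (by positivity), ← Real.rpow_mul (by positivity)]
  have hexp : X ^ s * (g * (ω ^ (1 - p.toReal⁻¹) * Y ^ (n * (1 - p.toReal⁻¹))) *
      (ω ^ q.toReal⁻¹ * X ^ (n * q.toReal⁻¹))) =
      ω ^ (1 - p.toReal⁻¹ + q.toReal⁻¹) * (g * (Y ^ b * X ^ a)) * Y ^ s' := by
    rw [Real.rpow_add hω, show n * (1 - p.toReal⁻¹) = b + s' by rw [← hb]; ring, ← ha,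
      Real.rpow_add hX, Real.rpow_add hY]
    ring
  have hkernel : ∀ᵐ x ∂volume.restrict (annulus n j), ∀ᵐ y ∂volume.restrict (annulus n k),
      K x y ≤ ENNReal.ofReal g :=
    (ae_restrict_mem (measurableSet_annulus n j)).mono fun x hx =>
      (ae_restrict_mem (measurableSet_annulus n k)).mono fun y hy => hKg x hx y hy
  rw [← mul_assoc, ← ENNReal.ofReal_mul (by positivity), ← hexp, ENNReal.ofReal_mul (by positivity),
    ENNReal.ofReal_mul (by positivity), ENNReal.ofReal_mul hg, mul_assoc]
  gcongr
  refine (eLpNorm_lintegral_mul_le_of_le hK hf hp hkernel).trans ?_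
  simp only [Measure.restrict_apply_univ]
  gcongr
  · exact hvol k hpinv
  · exact hvol j (inv_nonneg.2 toReal_nonneg)

theorem rpow_neg_div_two_mul_rpow_mul_rpow {t X Y : ℝ} (ht : 0 < t) (hX : 0 < X) (hY : 0 < Y)
    (a b ν : ℝ) :
    t ^ (-ν / 2) * (Y ^ b * X ^ a) = t ^ (-((ν - a - b) / 2)) * ((X / √t) ^ a * (Y / √t) ^ b) := by
  have hsplit : t ^ (-((ν - a - b) / 2)) = t ^ (-ν / 2) * t ^ (1 / 2 * a) * t ^ (1 / 2 * b) := by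
    rw [← Real.rpow_add ht, ← Real.rpow_add ht]
    ring_nf
  rw [Real.div_rpow hX.le (by positivity), Real.div_rpow hY.le (by positivity), Real.sqrt_eq_rpow,
    ← Real.rpow_mul ht.le, ← Real.rpow_mul ht.le, hsplit]
  field_simp

theorem rpow_mul_rpow_mul_min_le {x y w : ℝ} (hx : 0 < x) (hy : 0 < y) (hxw : x ≤ 4 * w)
    (hyw : y ≤ 4 * w) (ha : 0 ≤ a) (hb : 0 ≤ b) :
    x ^ a * y ^ b * min (w ^ (-a)) (w ^ (-(a + 2 * b))) ≤
      4 ^ (a + 2 * b) * min (y ^ b) (y ^ (-b)) := by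
  have hw : 0 < w := by linarith
  have hxa : x ^ a * w ^ (-a) ≤ 4 ^ a := by
    rw [Real.rpow_neg hw.le, ← div_eq_mul_inv, div_le_iff₀ (by positivity),
      ← Real.mul_rpow zero_le_four hw.le]
    gcongr
  have hyb : w ^ (-(2 * b)) ≤ 4 ^ (2 * b) * y ^ (-(2 * b)) := by
    rw [Real.rpow_neg hw.le, Real.rpow_neg hy.le, ← div_eq_mul_inv, inv_le_comm₀ (by positivity)
      (by positivity), inv_div, div_le_iff₀ (by positivity), mul_comm (w ^ _),
      ← Real.mul_rpow zero_le_four hw.le]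
    gcongr
  rw [mul_min_of_nonneg (y ^ b) _ (by positivity)]
  refine le_min ?_ ?_
  · calc x ^ a * y ^ b * min (w ^ (-a)) (w ^ (-(a + 2 * b)))
        ≤ x ^ a * y ^ b * w ^ (-a) := by gcongr; exact min_le_left _ _
      _ = x ^ a * w ^ (-a) * y ^ b := by ring
      _ ≤ 4 ^ a * y ^ b := by gcongr
      _ ≤ 4 ^ (a + 2 * b) * y ^ b := by gcongr <;> linarith
  · calc x ^ a * y ^ b * min (w ^ (-a)) (w ^ (-(a + 2 * b)))
        ≤ x ^ a * y ^ b * w ^ (-(a + 2 * b)) := by gcongr; exact min_le_right _ _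
      _ = x ^ a * w ^ (-a) * y ^ b * w ^ (-(2 * b)) := by
          rw [neg_add, Real.rpow_add hw]
          ring
      _ ≤ 4 ^ a * y ^ b * (4 ^ (2 * b) * y ^ (-(2 * b))) := by gcongr
      _ = 4 ^ (a + 2 * b) * y ^ (-b) := by
          rw [Real.rpow_add zero_lt_four, show -b = b + -(2 * b) by ring, Real.rpow_add hy]
          ring

theorem exists_heatKernel_annulus_le (n : ℕ) {N N' : ℝ} (hN : 0 ≤ N) (hN' : 0 ≤ N') :
    ∃ C : ℝ, 0 < C ∧ ∀ {t : ℝ} {j k : ℤ} {x y : Euc n}, 0 < t → 2 ≤ |k - j| →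
      x ∈ annulus n j → y ∈ annulus n k → heatKernel n t x y ≤ C * (t ^ (-(n : ℝ) / 2) *
        min ((max (2 ^ j) (2 ^ k) / 4 / √t) ^ (-N)) ((max (2 ^ j) (2 ^ k) / 4 / √t) ^ (-N'))) := by
  obtain ⟨C, hC, hdecay⟩ := exists_heatKernel_le_rpow_neg_of_le_norm_sub n hN
  obtain ⟨C', -, hdecay'⟩ := exists_heatKernel_le_rpow_neg_of_le_norm_sub n hN'
  refine ⟨max C C', by positivity, fun ht hjk hx hy => ?_⟩
  have hdist := max_two_zpow_div_four_le_norm_sub hjk hx hy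
  rw [← mul_assoc, mul_min_of_nonneg _ _ (by positivity)]
  refine le_min ((hdecay ht (by positivity) hdist).trans ?_)
    ((hdecay' ht (by positivity) hdist).trans ?_)
  · gcongr
    exact le_max_left _ _
  · gcongr
    exact le_max_right _ _

theorem exists_mul_eLpNorm_annulus_heat_le_of_far (n : ℕ) (hp : 1 ≤ p)
    (ha : s + n * q.toReal⁻¹ = a) (ha0 : 0 ≤ a) (hb : n - s' - n * p.toReal⁻¹ = b) (hb0 : 0 ≤ b) :
    ∃ C : ℝ, 0 < C ∧ ∀ {t : ℝ} {j k : ℤ} {f : Euc n → ℝ≥0∞}, 0 < t → Measurable f →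
      2 ≤ |k - j| → ENNReal.ofReal (((2 : ℝ) ^ j) ^ s) * eLpNorm
          (fun x => ∫⁻ y in annulus n k, eHeatKernel n t x y * f y) q
          (volume.restrict (annulus n j)) ≤
        ENNReal.ofReal (C * (t ^ (-((n - a - b) / 2)) *
            min (((2 : ℝ) ^ k / √t) ^ b) ((2 ^ k / √t) ^ (-b)))) *
          (ENNReal.ofReal (((2 : ℝ) ^ k) ^ s') * eLpNorm f p (volume.restrict (annulus n k))) := by
  -- The decay rate `a` leaves a factor summable over `2 ^ k ≤ √t`, and the rate `a + 2 * b` one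
  -- summable over `√t ≤ 2 ^ k`.
  obtain ⟨C, hC, hkernel⟩ := exists_heatKernel_annulus_le n ha0 (by positivity : 0 ≤ a + 2 * b)
  set ω := volume.real (Metric.ball (0 : Euc n) 1) ^ (1 - p.toReal⁻¹ + q.toReal⁻¹)
  have hω0 : 0 < ω := Real.rpow_pos_of_pos
    (ENNReal.toReal_pos (Metric.measure_ball_pos _ _ one_pos).ne' measure_ball_lt_top.ne) _
  refine ⟨ω * C * 4 ^ (a + 2 * b), by positivity, fun {t j k f} ht hf hjk => ?_⟩
  set X : ℝ := 2 ^ j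
  set Y : ℝ := 2 ^ k
  have hX : 0 < X := by positivity
  have hY : 0 < Y := by positivity
  set w := max X Y / 4 / √t with hw
  have hXw : X / √t ≤ 4 * w := by
    rw [hw, div_right_comm, mul_div_cancel₀ _ four_ne_zero]
    gcongr
    exact le_max_left X Y
  have hYw : Y / √t ≤ 4 * w := by
    rw [hw, div_right_comm, mul_div_cancel₀ _ four_ne_zero]
    gcongr
    exact le_max_right X Y
  refine (mul_eLpNorm_annulus_lintegral_mul_le (measurable_uncurry_eHeatKernel n t) hf hp ha
    hb (by positivity) fun x hx y hy => ENNReal.ofReal_le_ofReal (hkernel ht hjk hx hy)).trans ?_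
  gcongr ENNReal.ofReal ?_ * _
  calc ω * (C * (t ^ (-(n : ℝ) / 2) * min (w ^ (-a)) (w ^ (-(a + 2 * b)))) * (Y ^ b * X ^ a))
      = ω * C * (t ^ (-(n : ℝ) / 2) * (Y ^ b * X ^ a)) * min (w ^ (-a)) (w ^ (-(a + 2 * b))) := by
        ring
    _ = ω * C * t ^ (-((n - a - b) / 2)) *
          ((X / √t) ^ a * (Y / √t) ^ b * min (w ^ (-a)) (w ^ (-(a + 2 * b)))) := by
        rw [rpow_neg_div_two_mul_rpow_mul_rpow ht hX hY]
        ring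
    _ ≤ ω * C * t ^ (-((n - a - b) / 2)) *
          (4 ^ (a + 2 * b) * min ((Y / √t) ^ b) ((Y / √t) ^ (-b))) := by
        gcongr ω * C * t ^ (-((n - a - b) / 2)) * ?_
        exact rpow_mul_rpow_mul_min_le (by positivity) (by positivity) hXw hYw ha0 hb0
    _ = _ := by ring

theorem mul_eLpNorm_annulus_heat_le_of_le_sqrt {t : ℝ} (ht : 0 < t) {f : Euc n → ℝ≥0∞}
    (hf : Measurable f) (hp : 1 ≤ p) (ha : s + n * q.toReal⁻¹ = a) (ha0 : 0 ≤ a)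
    (hb : n - s' - n * p.toReal⁻¹ = b) (hb0 : 0 ≤ b) {j k : ℤ} (hjk : |k - j| ≤ 1)
    (hj : (2 : ℝ) ^ j ≤ √t) :
    ENNReal.ofReal (((2 : ℝ) ^ j) ^ s) * eLpNorm
        (fun x => ∫⁻ y in annulus n k, eHeatKernel n t x y * f y) q
        (volume.restrict (annulus n j)) ≤
      ENNReal.ofReal (volume.real (Metric.ball (0 : Euc n) 1) ^ (1 - p.toReal⁻¹ + q.toReal⁻¹) *
          2 ^ b * t ^ (-((n - a - b) / 2))) *
        (ENNReal.ofReal (((2 : ℝ) ^ k) ^ s') * eLpNorm f p (volume.restrict (annulus n k))) := by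
  refine (mul_eLpNorm_annulus_lintegral_mul_le (measurable_uncurry_eHeatKernel n t) hf hp ha
    hb (by positivity) fun x _ y _ => ENNReal.ofReal_le_ofReal (heatKernel_le_rpow ht x y)).trans ?_
  have hk : (2 : ℝ) ^ k ≤ 2 * 2 ^ j := by
    rw [← zpow_one_add₀ two_ne_zero]
    exact zpow_le_zpow_right₀ one_le_two (by linarith [abs_le.1 hjk])
  have hja : ((2 : ℝ) ^ j / √t) ^ a ≤ 1 :=
    Real.rpow_le_one (by positivity) (div_le_one_of_le₀ hj (by positivity)) ha0
  have hkb : ((2 : ℝ) ^ k / √t) ^ b ≤ 2 ^ b := by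
    refine Real.rpow_le_rpow (by positivity) ?_ hb0
    rw [div_le_iff₀ (by positivity)]
    linarith
  gcongr ENNReal.ofReal ?_ * _
  rw [rpow_neg_div_two_mul_rpow_mul_rpow ht (by positivity) (by positivity), mul_assoc,
    mul_comm (2 ^ b)]
  gcongr
  simpa using mul_le_mul hja hkb (by positivity) zero_le_one

theorem mul_eLpNorm_annulus_heat_le_of_sqrt_le {t : ℝ} (ht : 0 < t) {f : Euc n → ℝ≥0∞}
    (hf : Measurable f) (hp : 1 ≤ p) (hpq : p ≤ q) (hss' : s ≤ s') {j k : ℤ} (hjk : |k - j| ≤ 1)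
    (hj : √t ≤ (2 : ℝ) ^ j) :
    ENNReal.ofReal (((2 : ℝ) ^ j) ^ s) * eLpNorm
        (fun x => ∫⁻ y in annulus n k, eHeatKernel n t x y * f y) q
        (volume.restrict (annulus n j)) ≤
      ENNReal.ofReal (2 ^ |s'| * t ^ (-((s' - s) + n * (p.toReal⁻¹ - q.toReal⁻¹)) / 2)) *
        (ENNReal.ofReal (((2 : ℝ) ^ k) ^ s') * eLpNorm f p (volume.restrict (annulus n k))) := by
  have hyoung := eLpNorm_lintegral_mul_le_young (μ := volume.restrict (annulus n j))
    (ν := volume.restrict (annulus n k)) (measurable_uncurry_eHeatKernel n t) hf hp hpq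
    (fun x => (setLIntegral_le_lintegral _ _).trans_eq (lintegral_eHeatKernel_right ht x))
    (fun y => (setLIntegral_le_lintegral _ _).trans_eq (lintegral_eHeatKernel_left ht y))
    (Eventually.of_forall fun x => Eventually.of_forall fun y =>
      ENNReal.ofReal_le_ofReal (heatKernel_le_rpow ht x y))
  simp only [ENNReal.one_rpow, one_mul, ENNReal.ofReal_rpow_of_pos (Real.rpow_pos_of_pos ht _),
    ← Real.rpow_mul ht.le] at hyoung
  refine (mul_le_mul_right hyoung _).trans ?_
  rw [← mul_assoc, ← mul_assoc, ← ENNReal.ofReal_mul (by positivity),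
    ← ENNReal.ofReal_mul (by positivity)]
  gcongr ENNReal.ofReal ?_ * _
  have hratio : ((2 : ℝ) ^ j / 2 ^ k) ^ s' ≤ 2 ^ |s'| := by
    refine rpow_le_two_rpow_abs ?_ ?_ s'
    · rw [← zpow_sub₀ two_ne_zero, ← zpow_neg_one]
      exact zpow_le_zpow_right₀ one_le_two (by linarith [abs_le.1 hjk])
    · rw [← zpow_sub₀ two_ne_zero]
      exact (zpow_le_zpow_right₀ one_le_two (by linarith [abs_le.1 hjk])).trans_eq (zpow_one 2)
  rw [Real.div_rpow (by positivity) (by positivity), div_le_iff₀ (by positivity)] at hratio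
  have htime : √t ^ (-(s' - s)) * t ^ (-(n : ℝ) / 2 * (p.toReal⁻¹ - q.toReal⁻¹)) =
      t ^ (-((s' - s) + n * (p.toReal⁻¹ - q.toReal⁻¹)) / 2) := by
    rw [Real.sqrt_eq_rpow, ← Real.rpow_mul ht.le, ← Real.rpow_add ht]
    ring_nf
  calc ((2 : ℝ) ^ j) ^ s * t ^ (-(n : ℝ) / 2 * (p.toReal⁻¹ - q.toReal⁻¹))
      = ((2 : ℝ) ^ j) ^ s' * ((2 : ℝ) ^ j) ^ (-(s' - s)) *
          t ^ (-(n : ℝ) / 2 * (p.toReal⁻¹ - q.toReal⁻¹)) := by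
        rw [← Real.rpow_add (by positivity), neg_sub, add_sub_cancel]
    _ ≤ 2 ^ |s'| * ((2 : ℝ) ^ k) ^ s' * √t ^ (-(s' - s)) *
          t ^ (-(n : ℝ) / 2 * (p.toReal⁻¹ - q.toReal⁻¹)) := by
        gcongr ?_ * ?_ * _
        exact Real.rpow_le_rpow_of_nonpos (by positivity) hj (by linarith)
    _ = _ := by
        rw [mul_assoc _ (√t ^ _), htime]
        ring

/-- The weight with which the data on the `k`-th dyadic annulus enter the bound for the heat flow at
time `R ^ 2` on the `j`-th one. -/
def annulusWeight (b R : ℝ) (j k : ℤ) : ℝ :=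
  min (((2 : ℝ) ^ k / R) ^ b) ((2 ^ k / R) ^ (-b)) + if |k - j| ≤ 1 then 1 else 0

theorem exists_mul_eLpNorm_annulus_heat_le (n : ℕ) (hp : 1 ≤ p) (hpq : p ≤ q)
    (ha : s + n * q.toReal⁻¹ = a) (ha0 : 0 ≤ a) (hb : n - s' - n * p.toReal⁻¹ = b) (hb0 : 0 ≤ b)
    (hss' : s ≤ s') :
    ∃ C : ℝ, 0 < C ∧ ∀ {t : ℝ} {f : Euc n → ℝ≥0∞} (j k : ℤ), 0 < t → Measurable f →
      ENNReal.ofReal (((2 : ℝ) ^ j) ^ s) * eLpNorm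
          (fun x => ∫⁻ y in annulus n k, eHeatKernel n t x y * f y) q
          (volume.restrict (annulus n j)) ≤
        ENNReal.ofReal (C * t ^ (-((n - a - b) / 2)) * annulusWeight b (√t) j k) *
          (ENNReal.ofReal (((2 : ℝ) ^ k) ^ s') * eLpNorm f p (volume.restrict (annulus n k))) := by
  obtain ⟨C, hC, hfar⟩ := exists_mul_eLpNorm_annulus_heat_le_of_far n hp ha ha0 hb hb0
  set ω := volume.real (Metric.ball (0 : Euc n) 1) ^ (1 - p.toReal⁻¹ + q.toReal⁻¹)
  refine ⟨C + ω * 2 ^ b + 2 ^ |s'|, by positivity, fun {t f} j k ht hf => ?_⟩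
  set m := min (((2 : ℝ) ^ k / √t) ^ b) ((2 ^ k / √t) ^ (-b))
  have hm0 : 0 ≤ m := le_min (by positivity) (by positivity)
  have hCle : C ≤ C + ω * 2 ^ b + 2 ^ |s'| := by
    rw [add_assoc]
    exact le_add_of_nonneg_right (by positivity)
  have hωle : ω * 2 ^ b ≤ C + ω * 2 ^ b + 2 ^ |s'| := by
    rw [add_right_comm]
    exact le_add_of_nonneg_left (by positivity)
  have hs'le : 2 ^ |s'| ≤ C + ω * 2 ^ b + 2 ^ |s'| := le_add_of_nonneg_left (by positivity)
  rcases le_or_gt 2 |k - j| with hjk | hjk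
  · refine (hfar ht hf hjk).trans ?_
    rw [annulusWeight, if_neg (by omega), add_zero, ← mul_assoc C]
    gcongr
  have hjk1 : |k - j| ≤ 1 := by omega
  have hweight : 1 ≤ annulusWeight b (√t) j k := by
    rw [annulusWeight, if_pos hjk1]
    exact le_add_of_nonneg_left hm0
  have hexp : -((s' - s) + n * (p.toReal⁻¹ - q.toReal⁻¹)) / 2 = -((n - a - b) / 2) := by
    rw [← ha, ← hb]
    ring
  rcases le_total ((2 : ℝ) ^ j) (√t) with hj | hj
  · refine (mul_eLpNorm_annulus_heat_le_of_le_sqrt ht hf hp ha ha0 hb hb0 hjk1 hj).trans ?_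
    gcongr ENNReal.ofReal ?_ * _
    exact (le_mul_of_one_le_right (by positivity) hweight).trans (by gcongr)
  · refine (mul_eLpNorm_annulus_heat_le_of_sqrt_le ht hf hp hpq hss' hjk1 hj).trans ?_
    rw [hexp]
    gcongr ENNReal.ofReal ?_ * _
    exact (le_mul_of_one_le_right (by positivity) hweight).trans (by gcongr)

theorem summable_rpow_natAbs {c : ℝ} (hc0 : 0 ≤ c) (hc1 : c < 1) :
    Summable fun i : ℤ => c ^ i.natAbs := by
  have hgeom := summable_geometric_of_lt_one hc0 hc1
  exact Summable.of_nat_of_neg (by simpa using hgeom) (by simpa using hgeom)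

theorem min_rpow_div_le_geometric (hb : 0 ≤ b) {R : ℝ} {k₀ : ℤ} (hR : (2 : ℝ) ^ k₀ ≤ R)
    (hR' : R < 2 ^ (k₀ + 1)) (k : ℤ) :
    min (((2 : ℝ) ^ k / R) ^ b) ((2 ^ k / R) ^ (-b)) ≤
      2 ^ b * ((2 : ℝ) ^ (-b)) ^ (k - k₀).natAbs := by
  have hR0 : 0 < R := lt_of_lt_of_le (by positivity) hR
  have hnatAbs : ((k - k₀).natAbs : ℝ) = |((k - k₀ : ℤ) : ℝ)| := by
    rw [Nat.cast_natAbs, Int.cast_abs]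
  rw [← Real.rpow_natCast, ← Real.rpow_mul zero_le_two, hnatAbs, ← Real.rpow_add zero_lt_two]
  rcases le_total k k₀ with hk | hk
  · have hup : (2 : ℝ) ^ k / R ≤ 2 ^ ((k - k₀ : ℤ) : ℝ) := by
      rw [Real.rpow_intCast, zpow_sub₀ two_ne_zero]
      gcongr
    calc min (((2 : ℝ) ^ k / R) ^ b) ((2 ^ k / R) ^ (-b)) ≤ ((2 : ℝ) ^ k / R) ^ b := min_le_left _ _
      _ ≤ (2 ^ ((k - k₀ : ℤ) : ℝ)) ^ b := by gcongr
      _ ≤ 2 ^ (b + -b * |((k - k₀ : ℤ) : ℝ)|) := by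
        rw [← Real.rpow_mul zero_le_two, abs_of_nonpos (by exact_mod_cast sub_nonpos.2 hk)]
        exact Real.rpow_le_rpow_of_exponent_le one_le_two (by linarith)
  · have hlow : (2 : ℝ) ^ (((k - k₀ : ℤ) : ℝ) - 1) ≤ 2 ^ k / R := by
      rw [Real.rpow_sub_one two_ne_zero, Real.rpow_intCast, zpow_sub₀ two_ne_zero, div_div,
        ← zpow_add_one₀ two_ne_zero]
      gcongr
    calc min (((2 : ℝ) ^ k / R) ^ b) ((2 ^ k / R) ^ (-b))
        ≤ ((2 : ℝ) ^ k / R) ^ (-b) := min_le_right _ _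
      _ ≤ (2 ^ (((k - k₀ : ℤ) : ℝ) - 1)) ^ (-b) :=
        Real.rpow_le_rpow_of_nonpos (by positivity) hlow (neg_nonpos.2 hb)
      _ = 2 ^ (b + -b * |((k - k₀ : ℤ) : ℝ)|) := by
        rw [← Real.rpow_mul zero_le_two, abs_of_nonneg (by exact_mod_cast sub_nonneg.2 hk)]
        ring_nf

theorem exists_tsum_min_rpow_le (hb : 0 < b) :
    ∃ C : ℝ, 0 ≤ C ∧ ∀ {R : ℝ}, 0 < R →
      ∑' k : ℤ, ENNReal.ofReal (min (((2 : ℝ) ^ k / R) ^ b) ((2 ^ k / R) ^ (-b))) ≤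
        ENNReal.ofReal C := by
  have hsum : Summable fun i : ℤ => 2 ^ b * ((2 : ℝ) ^ (-b)) ^ i.natAbs :=
    (summable_rpow_natAbs (by positivity)
      (Real.rpow_lt_one_of_one_lt_of_neg one_lt_two (neg_neg_iff_pos.2 hb))).mul_left _
  have hnonneg (i : ℤ) : 0 ≤ 2 ^ b * ((2 : ℝ) ^ (-b)) ^ i.natAbs := by positivity
  refine ⟨∑' i : ℤ, 2 ^ b * ((2 : ℝ) ^ (-b)) ^ i.natAbs, tsum_nonneg hnonneg, fun {R} hR => ?_⟩
  obtain ⟨k₀, hk₀⟩ := exists_mem_Ico_zpow hR one_lt_two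
  rw [ENNReal.ofReal_tsum_of_nonneg hnonneg hsum,
    ← (Equiv.subRight k₀).tsum_eq fun i : ℤ =>
      ENNReal.ofReal (2 ^ b * ((2 : ℝ) ^ (-b)) ^ i.natAbs)]
  exact ENNReal.tsum_le_tsum fun k =>
    ENNReal.ofReal_le_ofReal (min_rpow_div_le_geometric hb.le hk₀.1 hk₀.2 k)

theorem exists_tsum_annulusWeight_le (hb : 0 < b) :
    ∃ C : ℝ, 0 < C ∧ ∀ {R : ℝ} (j : ℤ), 0 < R →
      ∑' k : ℤ, ENNReal.ofReal (annulusWeight b R j k) ≤ ENNReal.ofReal C := by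
  obtain ⟨C, hC, hmin⟩ := exists_tsum_min_rpow_le hb
  refine ⟨C + 3, by positivity, fun {R} j hR => ?_⟩
  have hnear : ∑' k : ℤ, ENNReal.ofReal (if |k - j| ≤ 1 then 1 else 0) = ENNReal.ofReal 3 := by
    have hIcc (k : ℤ) : |k - j| ≤ 1 ↔ k ∈ Finset.Icc (j - 1) (j + 1) := by
      rw [abs_le, Finset.mem_Icc]
      omega
    simp only [hIcc]
    rw [tsum_eq_sum (s := Finset.Icc (j - 1) (j + 1)) fun k hk => by simp [hk],
      Finset.sum_congr rfl fun k hk => by rw [if_pos hk, ENNReal.ofReal_one]]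
    simp [show j + 1 + 1 - (j - 1) = 3 by ring]
  have hsplit (k : ℤ) : ENNReal.ofReal (annulusWeight b R j k) =
      ENNReal.ofReal (min (((2 : ℝ) ^ k / R) ^ b) ((2 ^ k / R) ^ (-b))) +
        ENNReal.ofReal (if |k - j| ≤ 1 then 1 else 0) :=
    ENNReal.ofReal_add (le_min (by positivity) (by positivity)) (by positivity)
  rw [tsum_congr hsplit, ENNReal.tsum_add, hnear, ENNReal.ofReal_add hC zero_le_three]
  gcongr
  exact hmin hR

theorem exists_herzSupNorm_heat_le (n : ℕ) [NeZero n] (hp : 1 ≤ p) (hpq : p ≤ q)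
    (ha : s + n * q.toReal⁻¹ = a) (ha0 : 0 ≤ a) (hb : n - s' - n * p.toReal⁻¹ = b) (hb0 : 0 < b)
    (hss' : s ≤ s') :
    ∃ C : ℝ, 0 < C ∧ ∀ {t : ℝ} {f : Euc n → ℝ≥0∞}, 0 < t → Measurable f →
      herzSupNorm s q (fun x => ∫⁻ y, eHeatKernel n t x y * f y) ≤
        ENNReal.ofReal (C * t ^ (-((n - a - b) / 2))) * herzSupNorm s' p f := by
  obtain ⟨C, hC, hpiece⟩ := exists_mul_eLpNorm_annulus_heat_le n hp hpq ha ha0 hb hb0.le hss'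
  obtain ⟨D, hD, hsum⟩ := exists_tsum_annulusWeight_le hb0
  refine ⟨C * D, by positivity, fun {t f} ht hf => iSup_le fun j => ?_⟩
  have hint : Measurable fun z : Euc n × Euc n => eHeatKernel n t z.1 z.2 * f z.2 :=
    (measurable_uncurry_eHeatKernel n t).mul (hf.comp measurable_snd)
  have hmeas : Measurable (Function.uncurry fun (k : ℤ) (x : Euc n) =>
      ∫⁻ y in annulus n k, eHeatKernel n t x y * f y) :=
    measurable_from_prod_countable_right fun k =>
      hint.lintegral_prod_right' (ν := volume.restrict (annulus n k))
  have hsplit : (fun x => ∫⁻ y, eHeatKernel n t x y * f y) =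
      fun x => ∫⁻ k : ℤ, (∫⁻ y in annulus n k, eHeatKernel n t x y * f y) ∂Measure.count := by
    funext x
    rw [lintegral_count, lintegral_eq_tsum_annulus]
  calc ENNReal.ofReal (((2 : ℝ) ^ j) ^ s) *
        eLpNorm (fun x => ∫⁻ y, eHeatKernel n t x y * f y) q (volume.restrict (annulus n j))
      ≤ ENNReal.ofReal (((2 : ℝ) ^ j) ^ s) * ∑' k : ℤ,
          eLpNorm (fun x => ∫⁻ y in annulus n k, eHeatKernel n t x y * f y) q
            (volume.restrict (annulus n j)) := by
        rw [hsplit, ← lintegral_count]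
        gcongr
        exact eLpNorm_lintegral_le hmeas (hp.trans hpq)
    _ ≤ ∑' k : ℤ, ENNReal.ofReal (C * t ^ (-((n - a - b) / 2)) * annulusWeight b (√t) j k) *
          herzSupNorm s' p f := by
        rw [← ENNReal.tsum_mul_left]
        exact ENNReal.tsum_le_tsum fun k => (hpiece j k ht hf).trans
          (mul_le_mul_right (mul_eLpNorm_annulus_le_herzSupNorm s' p f k) _)
    _ ≤ ENNReal.ofReal (C * t ^ (-((n - a - b) / 2))) * ENNReal.ofReal D *
          herzSupNorm s' p f := by
        simp only [ENNReal.tsum_mul_right, ENNReal.ofReal_mul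
          (show 0 ≤ C * t ^ (-((n - a - b) / 2)) by positivity), ENNReal.tsum_mul_left]
        gcongr
        exact hsum j (by positivity)
    _ = _ := by
        rw [← ENNReal.ofReal_mul (by positivity), mul_right_comm]

end Smoothing

section Duhamel

variable {n : ℕ} {γ α T : ℝ} {u₀ : Euc n → ℝ} {u u₁ u₂ : ℝ → Euc n → ℝ}

theorem measurable_uncurry_nonlin (γ α : ℝ) (hu : Measurable (Function.uncurry u)) :
    Measurable (Function.uncurry fun τ => nonlin n γ α (u τ)) :=
  ((measurable_snd.norm.pow_const γ).mul (hu.abs.pow_const (α - 1))).mul hu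

theorem measurable_uncurry_enorm_nonlin_sub (γ α : ℝ) (hu₁ : Measurable (Function.uncurry u₁))
    (hu₂ : Measurable (Function.uncurry u₂)) :
    Measurable (Function.uncurry fun τ y =>
      ‖nonlin n γ α (u₁ τ) y - nonlin n γ α (u₂ τ) y‖ₑ) :=
  ((measurable_uncurry_nonlin γ α hu₁).sub (measurable_uncurry_nonlin γ α hu₂)).enorm

theorem measurable_eHeatKernel_mul {F : ℝ → Euc n → ℝ≥0∞} (hF : Measurable (Function.uncurry F))
    (t : ℝ) :
    Measurable fun z : (ℝ × Euc n) × Euc n => eHeatKernel n (t - z.1.1) z.1.2 z.2 * F z.1.1 z.2 :=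
  Measurable.mul (by fun_prop) (hF.comp (by fun_prop : Measurable fun z : (ℝ × Euc n) × Euc n =>
    (z.1.1, z.2)))

theorem IsMildSolution.ae_enorm_sub_le (h₁ : IsMildSolution n γ α T u₀ u₁)
    (h₂ : IsMildSolution n γ α T u₀ u₂) :
    ∀ᵐ p : ℝ × Euc n ∂(volume.restrict (Ioo (0 : ℝ) T)).prod volume,
      ‖u₁ p.1 p.2 - u₂ p.1 p.2‖ₑ ≤ ∫⁻ τ in Ioo 0 p.1, ∫⁻ y, eHeatKernel n (p.1 - τ) p.2 y *
        ‖nonlin n γ α (u₁ τ) y - nonlin n γ α (u₂ τ) y‖ₑ := by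
  filter_upwards [h₁.2, h₂.2] with p ⟨_, hint₁, hu₁⟩ ⟨_, hint₂, hu₂⟩
  have hmeas : Measurable fun z : ℝ × Euc n => eHeatKernel n (p.1 - z.1) p.2 z.2 *
      ‖nonlin n γ α (u₁ z.1) z.2 - nonlin n γ α (u₂ z.1) z.2‖ₑ :=
    Measurable.mul (by fun_prop) (measurable_uncurry_enorm_nonlin_sub γ α h₁.1 h₂.1)
  have htime : ∀ᵐ z ∂(volume.restrict (Ioo 0 p.1)).prod (volume : Measure (Euc n)),
      z.1 ∈ Ioo 0 p.1 :=
    Measure.quasiMeasurePreserving_fst.ae (ae_restrict_mem measurableSet_Ioo)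
  rw [hu₁, hu₂, add_sub_add_left_eq_sub, ← integral_sub hint₁ hint₂,
    ← lintegral_prod _ hmeas.aemeasurable]
  refine (enorm_integral_le_lintegral_enorm _).trans (lintegral_mono_ae ?_)
  filter_upwards [htime] with z hz
  rw [← mul_sub, enorm_mul, Real.enorm_of_nonneg (heatKernel_nonneg (sub_pos.2 hz.2) _ _),
    eHeatKernel]

theorem exists_herzSupNorm_nonlin_sub_heat_le [NeZero n] (γ : ℝ) (hα : 1 < α) {s a : ℝ} {q : ℝ≥0∞}
    (hq : ENNReal.ofReal α ≤ q) (hs : γ ≤ (α - 1) * s) (ha : s + n * q.toReal⁻¹ = a) (ha0 : 0 ≤ a)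
    (ha' : α * a < n + γ) :
    ∃ C : ℝ≥0∞, C ≠ ⊤ ∧ ∀ {t : ℝ} {v w : Euc n → ℝ}, 0 < t → Measurable v → Measurable w →
      herzSupNorm s q (fun x => ∫⁻ y, eHeatKernel n t x y *
          ‖nonlin n γ α v y - nonlin n γ α w y‖ₑ) ≤
        C * (herzSupNorm s q v + herzSupNorm s q w) ^ (α - 1) *
          ENNReal.ofReal (t ^ (-(((α - 1) * a - γ) / 2))) * herzSupNorm s q (v - w) := by
  have hb : (n : ℝ) - (α * s - γ) - n * (q / ENNReal.ofReal α).toReal⁻¹ = n + γ - α * a := by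
    rw [ENNReal.toReal_div, ENNReal.toReal_ofReal (by linarith), ← ha, inv_div]
    ring
  obtain ⟨C, hC, hheat⟩ := exists_herzSupNorm_heat_le n (one_le_div_ofReal hα hq)
    (div_ofReal_le_self hα) ha ha0 hb (sub_pos.2 ha') (by linarith)
  refine ⟨ENNReal.ofReal C * ENNReal.ofReal (2 ^ |γ|) * ENNReal.ofReal α, by finiteness,
    fun {t v w} ht hv hw => ?_⟩
  have hexp : -((n - a - (n + γ - α * a)) / 2) = -(((α - 1) * a - γ) / 2) := by ring
  refine (hheat ht (by unfold nonlin; fun_prop)).trans ?_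
  rw [hexp, ENNReal.ofReal_mul hC.le]
  calc _ ≤ _ := mul_le_mul_right (herzSupNorm_nonlin_sub_le hα hq γ s hv hw) _
    _ = _ := by ring

end Duhamel

section SingularGronwall

theorem lintegral_Ioo_rpow_mul_exp_le {δ l : ℝ} (hδ : δ < 1) (hl : 0 < l) (t : ℝ) :
    ∫⁻ τ in Ioo 0 t, ENNReal.ofReal ((t - τ) ^ (-δ) * Real.exp (l * τ)) ≤
      ENNReal.ofReal (l ^ (-(1 - δ)) * Real.Gamma (1 - δ)) * ENNReal.ofReal (Real.exp (l * t)) := by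
  have hΓ := Real.integral_rpow_mul_exp_neg_mul_Ioi (sub_pos.2 hδ) hl
  rw [one_div, Real.inv_rpow hl.le, ← Real.rpow_neg hl.le, sub_sub_cancel_left] at hΓ
  have hint : IntegrableOn (fun u : ℝ => u ^ (-δ) * Real.exp (-(l * u))) (Ioi 0) := by
    refine not_imp_comm.1 integral_undef ?_
    rw [hΓ]
    exact (mul_pos (by positivity) (Real.Gamma_pos_of_pos (sub_pos.2 hδ))).ne'
  set h : ℝ → ℝ≥0∞ :=
    (Ioi 0).indicator fun u => ENNReal.ofReal (u ^ (-δ) * Real.exp (-(l * u))) with hh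
  calc ∫⁻ τ in Ioo 0 t, ENNReal.ofReal ((t - τ) ^ (-δ) * Real.exp (l * τ))
      = ∫⁻ τ in Ioo 0 t, h (t - τ) * ENNReal.ofReal (Real.exp (l * t)) := by
        refine setLIntegral_congr_fun measurableSet_Ioo fun τ hτ => ?_
        simp only [hh, indicator_of_mem (show t - τ ∈ Ioi (0 : ℝ) from sub_pos.2 hτ.2)]
        rw [← ENNReal.ofReal_mul' (Real.exp_pos _).le, mul_assoc, ← Real.exp_add]
        ring_nf
    _ ≤ ∫⁻ τ, h (t - τ) * ENNReal.ofReal (Real.exp (l * t)) := setLIntegral_le_lintegral _ _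
    _ = (∫⁻ u, h u) * ENNReal.ofReal (Real.exp (l * t)) := by
        rw [lintegral_mul_const' _ _ ENNReal.ofReal_ne_top, lintegral_sub_left_eq_self h t]
    _ = _ := by
        rw [hh, lintegral_indicator measurableSet_Ioi, ← hΓ,
          ofReal_integral_eq_lintegral_ofReal hint]
        filter_upwards [ae_restrict_mem measurableSet_Ioi] with u hu
        exact mul_nonneg (Real.rpow_nonneg (le_of_lt hu) _) (Real.exp_pos _).le

theorem exists_pos_mul_ofReal_rpow_mul_le {δ : ℝ} (hδ : δ < 1) {K ε : ℝ≥0∞} (hK : K ≠ ⊤)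
    (hε : 0 < ε) (G : ℝ) :
    ∃ l : ℝ, 0 < l ∧ K * ENNReal.ofReal (l ^ (-(1 - δ)) * G) ≤ ε := by
  have hlim : Tendsto (fun l : ℝ => K * ENNReal.ofReal (l ^ (-(1 - δ)) * G)) atTop (nhds 0) := by
    simpa using ENNReal.Tendsto.const_mul (ENNReal.tendsto_ofReal
      ((tendsto_rpow_neg_atTop (sub_pos.2 hδ)).mul_const G)) (Or.inr hK)
  obtain ⟨l, hl, hle⟩ := ((eventually_gt_atTop 0).and (hlim.eventually_le_const hε)).exists
  exact ⟨l, hl, hle⟩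

theorem ae_le_mul_pow_mul_exp_of_le_lintegral {δ T l : ℝ} (hδ : δ < 1) (hl : 0 < l)
    {K M ε : ℝ≥0∞} {W : ℝ → ℝ≥0∞} (hM : M ≠ ⊤) (hε : ε ≠ ⊤) (hK : K ≠ ⊤)
    (hlε : K * ENNReal.ofReal (l ^ (-(1 - δ)) * Real.Gamma (1 - δ)) ≤ ε)
    (hWM : ∀ᵐ t ∂volume.restrict (Ioo (0 : ℝ) T), W t ≤ M)
    (hW : ∀ᵐ t ∂volume.restrict (Ioo (0 : ℝ) T),
      W t ≤ ∫⁻ τ in Ioo 0 t, K * ENNReal.ofReal ((t - τ) ^ (-δ)) * W τ) (m : ℕ) :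
    ∀ᵐ t ∂volume.restrict (Ioo (0 : ℝ) T),
      W t ≤ M * ε ^ m * ENNReal.ofReal (Real.exp (l * t)) := by
  induction m with
  | zero =>
    filter_upwards [hWM, ae_restrict_mem measurableSet_Ioo] with t ht htT
    rw [pow_zero, mul_one]
    exact ht.trans (le_mul_of_one_le_right zero_le
      (ENNReal.one_le_ofReal.2 (Real.one_le_exp (mul_nonneg hl.le htT.1.le))))
  | succ m ih =>
    filter_upwards [hW, ae_restrict_mem measurableSet_Ioo] with t ht htT
    have ih' := ae_restrict_of_ae_restrict_of_subset (Ioo_subset_Ioo_right htT.2.le) ih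
    calc W t ≤ ∫⁻ τ in Ioo 0 t, K * ENNReal.ofReal ((t - τ) ^ (-δ)) * W τ := ht
      _ ≤ ∫⁻ τ in Ioo 0 t, M * ε ^ m * K *
            ENNReal.ofReal ((t - τ) ^ (-δ) * Real.exp (l * τ)) := by
          refine lintegral_mono_ae (ih'.mono fun τ hτ => ?_)
          rw [ENNReal.ofReal_mul' (Real.exp_pos _).le]
          calc K * ENNReal.ofReal ((t - τ) ^ (-δ)) * W τ ≤ _ := mul_le_mul_right hτ _
            _ = _ := by ring
      _ = M * ε ^ m * (K * ∫⁻ τ in Ioo 0 t,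
            ENNReal.ofReal ((t - τ) ^ (-δ) * Real.exp (l * τ))) := by
          rw [lintegral_const_mul' _ _ (by finiteness), mul_assoc]
      _ ≤ M * ε ^ m * (ε * ENNReal.ofReal (Real.exp (l * t))) := by
          refine mul_le_mul_right ?_ _
          calc _ ≤ _ := mul_le_mul_right (lintegral_Ioo_rpow_mul_exp_le hδ hl t) K
            _ ≤ _ := by
              rw [← mul_assoc]
              gcongr
      _ = M * ε ^ (m + 1) * ENNReal.ofReal (Real.exp (l * t)) := by ring

theorem ae_eq_zero_of_le_lintegral_rpow_mul {δ T : ℝ} (hδ : δ < 1) {K M : ℝ≥0∞} (hK : K ≠ ⊤)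
    (hM : M ≠ ⊤) {W : ℝ → ℝ≥0∞} (hWM : ∀ᵐ t ∂volume.restrict (Ioo (0 : ℝ) T), W t ≤ M)
    (hW : ∀ᵐ t ∂volume.restrict (Ioo (0 : ℝ) T),
      W t ≤ ∫⁻ τ in Ioo 0 t, K * ENNReal.ofReal ((t - τ) ^ (-δ)) * W τ) :
    ∀ᵐ t ∂volume.restrict (Ioo (0 : ℝ) T), W t = 0 := by
  obtain ⟨l, hl, hlε⟩ := exists_pos_mul_ofReal_rpow_mul_le hδ hK
    (ENNReal.inv_pos.2 ENNReal.ofNat_ne_top : (0 : ℝ≥0∞) < 2⁻¹) (Real.Gamma (1 - δ))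
  have hiter := ae_le_mul_pow_mul_exp_of_le_lintegral hδ hl hM (by finiteness) hK hlε hWM hW
  filter_upwards [ae_all_iff.2 hiter] with t ht
  have hlim : Tendsto (fun m : ℕ => M * 2⁻¹ ^ m * ENNReal.ofReal (Real.exp (l * t)))
      atTop (nhds 0) := by
    have hpow : Tendsto (fun m : ℕ => (2⁻¹ : ℝ≥0∞) ^ m) atTop (nhds 0) :=
      ENNReal.tendsto_pow_atTop_nhds_zero_of_lt_one (ENNReal.inv_lt_one.2 one_lt_two)
    simpa using ENNReal.Tendsto.mul_const (ENNReal.Tendsto.const_mul hpow (Or.inr hM))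
      (Or.inr ENNReal.ofReal_ne_top)
  exact le_zero_iff.1 (ge_of_tendsto' hlim ht)

end SingularGronwall

section Uniqueness

variable {n : ℕ} {γ α s T : ℝ} {q : ℝ≥0∞} {u₀ : Euc n → ℝ} {u₁ u₂ : ℝ → Euc n → ℝ}

theorem herzSupNorm_sub_le {f g : Euc n → ℝ} (hf : AEStronglyMeasurable f)
    (hg : AEStronglyMeasurable g) (s : ℝ) (hq : 1 ≤ q) :
    herzSupNorm s q (f - g) ≤ herzSupNorm s q f + herzSupNorm s q g := by
  rw [sub_eq_add_neg]
  refine (herzSupNorm_add_le hf hg.neg s hq).trans (add_le_add_right ?_ _)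
  exact herzSupNorm_mono_enorm s q (ae_of_all _ fun x => (enorm_neg (g x)).le)

theorem IsMildSolution.ae_herzSupNorm_sub_le_lintegral (h₁ : IsMildSolution n γ α T u₀ u₁)
    (h₂ : IsMildSolution n γ α T u₀ u₂) (s : ℝ) (hq : 1 ≤ q) :
    ∀ᵐ t ∂volume.restrict (Ioo (0 : ℝ) T), herzSupNorm s q (u₁ t - u₂ t) ≤
      ∫⁻ τ in Ioo 0 t, herzSupNorm s q fun x => ∫⁻ y, eHeatKernel n (t - τ) x y *
        ‖nonlin n γ α (u₁ τ) y - nonlin n γ α (u₂ τ) y‖ₑ := by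
  filter_upwards [Measure.ae_ae_of_ae_prod (h₁.ae_enorm_sub_le h₂)] with t ht
  have hmeas := (measurable_eHeatKernel_mul
    (measurable_uncurry_enorm_nonlin_sub γ α h₁.1 h₂.1) t).lintegral_prod_right'
      (ν := (volume : Measure (Euc n)))
  exact (herzSupNorm_mono_enorm s q (ht.mono fun x hx => by simpa using hx)).trans
    (herzSupNorm_lintegral_le hmeas s hq)

theorem IsMildSolution.exists_ae_herzSupNorm_sub_le_lintegral_rpow [NeZero n] (hα : 1 < α)
    (hq : ENNReal.ofReal α ≤ q) (hs : γ ≤ (α - 1) * s) {a : ℝ} (ha : s + n * q.toReal⁻¹ = a)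
    (ha0 : 0 ≤ a) (ha' : α * a < n + γ) (h₁ : IsMildSolution n γ α T u₀ u₁)
    (h₂ : IsMildSolution n γ α T u₀ u₂) {M : ℝ≥0∞} (hM : M ≠ ⊤)
    (hb : ∀ᵐ τ ∂volume.restrict (Ioo (0 : ℝ) T),
      herzSupNorm s q (u₁ τ) + herzSupNorm s q (u₂ τ) ≤ M) :
    ∃ K : ℝ≥0∞, K ≠ ⊤ ∧ ∀ᵐ t ∂volume.restrict (Ioo (0 : ℝ) T),
      herzSupNorm s q (u₁ t - u₂ t) ≤ ∫⁻ τ in Ioo 0 t,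
        K * ENNReal.ofReal ((t - τ) ^ (-(((α - 1) * a - γ) / 2))) *
          herzSupNorm s q (u₁ τ - u₂ τ) := by
  obtain ⟨C, hC, hnonlin⟩ := exists_herzSupNorm_nonlin_sub_heat_le γ hα hq hs ha ha0 ha'
  refine ⟨C * M ^ (α - 1), by finiteness [sub_nonneg.2 hα.le], ?_⟩
  have hq1 : 1 ≤ q := (ENNReal.one_le_ofReal.2 hα.le).trans hq
  filter_upwards [h₁.ae_herzSupNorm_sub_le_lintegral h₂ s hq1,
    ae_restrict_mem measurableSet_Ioo] with t ht htT
  refine ht.trans (lintegral_mono_ae ?_)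
  filter_upwards [ae_restrict_of_ae_restrict_of_subset (Ioo_subset_Ioo_right htT.2.le) hb,
    ae_restrict_mem measurableSet_Ioo] with τ hτM hτ
  refine (hnonlin (sub_pos.2 hτ.2) h₁.1.of_uncurry_left h₂.1.of_uncurry_left).trans ?_
  gcongr

theorem IsMildSolution.ae_eq_of_herzSupNorm_add_le [NeZero n] (hα : 1 < α)
    (hq : ENNReal.ofReal α ≤ q) (hs : γ ≤ (α - 1) * s) {a : ℝ} (ha : s + n * q.toReal⁻¹ = a)
    (ha0 : 0 ≤ a) (ha' : α * a < n + γ) (ha'' : (α - 1) * a < 2 + γ)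
    (h₁ : IsMildSolution n γ α T u₀ u₁) (h₂ : IsMildSolution n γ α T u₀ u₂) {M : ℝ≥0∞}
    (hM : M ≠ ⊤) (hb : ∀ᵐ τ ∂volume.restrict (Ioo (0 : ℝ) T),
      herzSupNorm s q (u₁ τ) + herzSupNorm s q (u₂ τ) ≤ M) :
    ∀ᵐ p : ℝ × Euc n ∂(volume.restrict (Ioo (0 : ℝ) T)).prod volume,
      u₁ p.1 p.2 = u₂ p.1 p.2 := by
  have hq1 : 1 ≤ q := (ENNReal.one_le_ofReal.2 hα.le).trans hq
  have hbound : ∀ᵐ t ∂volume.restrict (Ioo (0 : ℝ) T), herzSupNorm s q (u₁ t - u₂ t) ≤ M :=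
    hb.mono fun t ht => (herzSupNorm_sub_le h₁.1.of_uncurry_left.aestronglyMeasurable
      h₂.1.of_uncurry_left.aestronglyMeasurable s hq1).trans ht
  obtain ⟨K, hK, hle⟩ :=
    h₁.exists_ae_herzSupNorm_sub_le_lintegral_rpow hα hq hs ha ha0 ha' h₂ hM hb
  have hzero := ae_eq_zero_of_le_lintegral_rpow_mul (by linarith) hK hM hbound hle
  refine (Measure.ae_prod_iff_ae_ae (measurableSet_eq_fun h₁.1 h₂.1)).2 ?_
  filter_upwards [hzero] with t ht
  have hsub : u₁ t - u₂ t =ᵐ[volume] 0 :=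
    ae_eq_zero_of_herzSupNorm_eq_zero
      (h₁.1.of_uncurry_left.sub h₂.1.of_uncurry_left).aestronglyMeasurable
      (one_pos.trans_le hq1).ne' ht
  exact hsub.mono fun x hx => sub_eq_zero.1 hx

theorem uniqueness_double_subcritical_general (hn : 1 ≤ n) (hα : 1 < α) (hs : γ / (α - 1) ≤ s)
    (hq : ENNReal.ofReal α ≤ q) (hσ : 0 ≤ s / (n : ℝ) + (q⁻¹).toReal)
    (hsub : s / (n : ℝ) + (q⁻¹).toReal <
      min ((2 + γ) / ((n : ℝ) * (α - 1))) (((n : ℝ) + γ) / ((n : ℝ) * α)))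
    (h₁ : IsMildSolution n γ α T u₀ u₁) (h₂ : IsMildSolution n γ α T u₀ u₂)
    (hb₁ : essSup (fun t => herzSupNorm s q (u₁ t)) (volume.restrict (Ioo (0 : ℝ) T)) < ⊤)
    (hb₂ : essSup (fun t => herzSupNorm s q (u₂ t)) (volume.restrict (Ioo (0 : ℝ) T)) < ⊤) :
    ∀ᵐ p : ℝ × Euc n ∂(volume.restrict (Ioo (0 : ℝ) T)).prod volume,
      u₁ p.1 p.2 = u₂ p.1 p.2 := by
  have : NeZero n := ⟨by omega⟩
  have hα1 : 0 < α - 1 := sub_pos.2 hα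
  have ha : s + n * q.toReal⁻¹ = n * (s / n + (q⁻¹).toReal) := by
    rw [ENNReal.toReal_inv]
    field_simp
  obtain ⟨hsub₁, hsub₂⟩ := lt_min_iff.1 hsub
  rw [lt_div_iff₀ (by positivity)] at hsub₁ hsub₂
  refine h₁.ae_eq_of_herzSupNorm_add_le hα hq ((div_le_iff₀' hα1).1 hs) ha (by positivity)
    (by linarith) (by linarith) h₂ (ENNReal.add_lt_top.2 ⟨hb₁, hb₂⟩).ne ?_
  filter_upwards [ENNReal.ae_le_essSup fun t => herzSupNorm s q (u₁ t),
    ENNReal.ae_le_essSup fun t => herzSupNorm s q (u₂ t)] with t ht₁ ht₂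
  exact add_le_add ht₁ ht₂

end Uniqueness

/-- Unconditional uniqueness for the Hardy–Hénon equation in the double subcritical case
`s/n + 1/q < min(1/q_c, 1/Q_c)`, where `1/q_c = (2+γ)/(n(α-1))` and `1/Q_c = (n+γ)/(nα)`. -/
theorem uniqueness_double_subcritical
    (n : ℕ) (hn : 1 ≤ n) (γ α s T : ℝ) (q r : ℝ≥0∞)
    (hγ : -(min 2 (n : ℝ)) < γ) (hα : 1 < α)
    (hα' : max 1 (1 + γ / (n : ℝ)) ≤ α)
    (hs1 : γ / (α - 1) ≤ s) (hs2 : s ≤ (n : ℝ))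
    (hq : ENNReal.ofReal α ≤ q) (hr : 0 < r)
    (hwd1 : 0 < s / (n : ℝ) + (q⁻¹).toReal ∨
      (s / (n : ℝ) + (q⁻¹).toReal = 0 ∧ r = ⊤))
    (hwd2 : s / (n : ℝ) + (q⁻¹).toReal < 1 ∨
      (s / (n : ℝ) + (q⁻¹).toReal = 1 ∧ r ≤ 1))
    (hsub : s / (n : ℝ) + (q⁻¹).toReal <
      min ((2 + γ) / ((n : ℝ) * (α - 1))) (((n : ℝ) + γ) / ((n : ℝ) * α)))
    (hT : 0 < T) (u₀ : Euc n → ℝ) (hu₀ : Measurable u₀)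
    (u₁ u₂ : ℝ → Euc n → ℝ)
    (h₁ : IsMildSolution n γ α T u₀ u₁) (h₂ : IsMildSolution n γ α T u₀ u₂)
    (hb₁ : essSup (fun t => herzNorm n s q r (u₁ t)) (volume.restrict (Set.Ioo (0 : ℝ) T)) < ⊤)
    (hb₂ : essSup (fun t => herzNorm n s q r (u₂ t)) (volume.restrict (Set.Ioo (0 : ℝ) T)) < ⊤) :
    ∀ᵐ p : ℝ × Euc n ∂((volume.restrict (Set.Ioo (0 : ℝ) T)).prod volume),
      u₁ p.1 p.2 = u₂ p.1 p.2 := by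
  exact uniqueness_double_subcritical_general hn hα hs1 hq (hwd1.elim le_of_lt fun h => h.1.ge) hsub
    h₁ h₂ ((essSup_mono_ae (.of_forall fun _ => herzSupNorm_le_herzNorm s q hr _)).trans_lt hb₁)
    ((essSup_mono_ae (.of_forall fun _ => herzSupNorm_le_herzNorm s q hr _)).trans_lt hb₂)
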